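/- arXiv:1012.1838 — 2 statements merged into one kernel-verified Lean document; each statement's English description precedes it below -/
import Mathlib

section
/- Let K be a field with at least 13 elements and let S be a smooth cubic surface in P^3 over K. Suppose S contains a pair of skew lines both defined over K, and let P be a K-rational point on either of these two lines that is not an Eckardt point. Then Span({P}) = S(K), i.e. every K-rational point of S is obtained from P by successive secant and tangent constructions. -/
/- Common framework: points, lines, intersection divisors, the secant-tangent span,
the groups `H_S(K)`, geometric notions over the algebraic closure, and topologies. -/

open MvPolynomial

noncomputable section

namespace CubicSurf

variable {K L : Type*} [Field K] [Field L] {n : ℕ}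

/-- The set of `K`-rational points of the projective hypersurface `F = 0`. -/
def zeroSet (F : MvPolynomial (Fin n) K) : Set (Projectivization K (Fin n → K)) :=
  {P | eval P.rep F = 0}

/-- The binary form obtained by restricting `F` to the line spanned by `u` and `v`,
via the parametrization `(s : t) ↦ s • u + t • v`. -/
def lineRestrict (F : MvPolynomial (Fin n) K) (u v : Fin n → K) : MvPolynomial (Fin 2) K :=
  aeval (fun i => C (u i) * X 0 + C (v i) * X 1) F

/-- A projective line: a 2-dimensional linear subspace of `K^n`. -/
def IsLine (W : Submodule K (Fin n → K)) : Prop := Module.finrank K W = 2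

/-- The line `W` lies (geometrically) on the hypersurface `F = 0`. -/
def LineOnSurf (F : MvPolynomial (Fin n) K) (W : Submodule K (Fin n → K)) : Prop :=
  ∀ u v : Fin n → K, u ∈ W → v ∈ W → lineRestrict F u v = 0

/-- The projective point `P` lies on the line `W`. -/
def OnLine (W : Submodule K (Fin n → K)) (P : Projectivization K (Fin n → K)) : Prop :=
  P.rep ∈ W

/-- The set of `K`-points of the line `W`. -/
def linePts (W : Submodule K (Fin n → K)) : Set (Projectivization K (Fin n → K)) :=
  {P | OnLine W P}

/-- `ℓ · S = P + Q + R`: the intersection divisor (with multiplicities) of the line `W`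
with the hypersurface `F = 0` is `P + Q + R`. -/
def MeetsIn (F : MvPolynomial (Fin n) K) (W : Submodule K (Fin n → K))
    (P Q R : Projectivization K (Fin n → K)) : Prop :=
  ∃ (u v : Fin n → K) (_ : u ∈ W) (_ : v ∈ W) (_ : LinearIndependent K ![u, v])
    (c : K) (l m : Fin 3 → K) (h : ∀ k, l k • u + m k • v ≠ 0),
      c ≠ 0 ∧
      lineRestrict F u v = C c * ∏ k : Fin 3, (C (m k) * X 0 - C (l k) * X 1) ∧
      Projectivization.mk K _ (h 0) = P ∧
      Projectivization.mk K _ (h 1) = Q ∧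
      Projectivization.mk K _ (h 2) = R

/-- Membership in the span of a set of points under the secant/tangent process:
the smallest subset of `S(K)` containing `B` such that whenever `P`, `Q` are in it and a
`K`-line `ℓ ⊄ S` satisfies `ℓ·S = P+Q+R` with `R ∈ S(K)`, then `R` is in it. -/
inductive SpanMem (F : MvPolynomial (Fin n) K) (B : Set (Projectivization K (Fin n → K))) :
    Projectivization K (Fin n → K) → Prop
  | base (P : Projectivization K (Fin n → K)) (hP : P ∈ B) : SpanMem F B P
  | secant (P Q R : Projectivization K (Fin n → K)) (W : Submodule K (Fin n → K))
      (hW : IsLine W) (hWS : ¬ LineOnSurf F W) (hP : SpanMem F B P) (hQ : SpanMem F B Q)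
      (hR : R ∈ zeroSet F) (hm : MeetsIn F W P Q R) : SpanMem F B R

/-- The span of a set of points under the secant/tangent process. -/
def Span (F : MvPolynomial (Fin n) K) (B : Set (Projectivization K (Fin n → K))) :
    Set (Projectivization K (Fin n → K)) :=
  {P | SpanMem F B P}

/-- Smoothness of the projective hypersurface `F = 0`: over the algebraic closure there is
no nonzero common zero of `F` and all of its partial derivatives. -/
def IsSmoothHypersurf (F : MvPolynomial (Fin n) K) : Prop :=
  ∀ v : Fin n → AlgebraicClosure K,
    eval v (MvPolynomial.map (algebraMap K (AlgebraicClosure K)) F) = 0 →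
    (∀ i, eval v (pderiv i (MvPolynomial.map (algebraMap K (AlgebraicClosure K)) F)) = 0) →
    v = 0

/-- A smooth cubic hypersurface. -/
def SmoothCubic (F : MvPolynomial (Fin n) K) : Prop :=
  F.IsHomogeneous 3 ∧ IsSmoothHypersurf F

/-- The linear form cutting out the tangent plane `Π_P` of `F = 0` at `P`,
evaluated at the representative of a point `Q`; `Q ∈ Π_P` iff this vanishes. -/
def tangentEval (F : MvPolynomial (Fin n) K) (P Q : Projectivization K (Fin n → K)) : K :=
  ∑ i, eval P.rep (pderiv i F) * Q.rep i

/-- The set of `K`-points of the tangent plane `Π_P`. -/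
def tangentPlanePts (F : MvPolynomial (Fin n) K) (P : Projectivization K (Fin n → K)) :
    Set (Projectivization K (Fin n → K)) :=
  {Q | tangentEval F P Q = 0}

/-- The set of `K`-points of `Γ_P = S ∩ Π_P`. -/
def GammaPts (F : MvPolynomial (Fin n) K) (P : Projectivization K (Fin n → K)) :
    Set (Projectivization K (Fin n → K)) :=
  zeroSet F ∩ tangentPlanePts F P

/-! ### Base change along a field embedding -/

/-- Base change of a vector along a field embedding. -/
def clVec (φ : K →+* L) (v : Fin n → K) : Fin n → L := fun i => φ (v i)

lemma clVec_ne_zero (φ : K →+* L) {v : Fin n → K} (hv : v ≠ 0) : clVec φ v ≠ 0 := by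
  intro h
  apply hv
  funext i
  have := congrFun h i
  simpa [clVec] using φ.injective (by simpa [clVec] using this)

/-- Base change of a projective point along a field embedding. -/
def clPt (φ : K →+* L) (P : Projectivization K (Fin n → K)) :
    Projectivization L (Fin n → L) :=
  Projectivization.mk L (clVec φ P.rep) (clVec_ne_zero φ P.rep_nonzero)

lemma eval_smul_of_isHomogeneous {R : Type*} [CommSemiring R] {F : MvPolynomial (Fin n) R}
    {d : ℕ} (hF : F.IsHomogeneous d) (a : R) (w : Fin n → R) :
    eval (a • w) F = a ^ d * eval w F := by
  classical
  rw [eval_eq', eval_eq', Finset.mul_sum]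
  refine Finset.sum_congr rfl fun s hs => ?_
  have hdeg : ∑ i, s i = d := by
    have h1 := hF (MvPolynomial.mem_support_iff.mp hs)
    rw [Finsupp.weight_apply] at h1
    rw [← h1, Finsupp.sum_fintype]
    · simp
    · intro i; simp
  have key : ∀ i : Fin n, (a • w) i ^ s i = a ^ s i * w i ^ s i := by
    intro i; simp [mul_pow]
  rw [Finset.prod_congr rfl (fun i _ => key i), Finset.prod_mul_distrib,
    Finset.prod_pow_eq_pow_sum, hdeg]
  ring

lemma clVec_eval (φ : K →+* L) (F : MvPolynomial (Fin n) K) (v : Fin n → K) :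
    eval (clVec φ v) (MvPolynomial.map φ F) = φ (eval v F) := by
  rw [eval_map]
  have h : φ (eval v F) = φ (eval₂Hom (RingHom.id K) v F) := rfl
  rw [h, map_eval₂Hom]
  rfl

/-- A point given by a vector on which a homogeneous `F` vanishes lies in the zero set. -/
lemma mk_mem_zeroSet {F : MvPolynomial (Fin n) K} {d : ℕ} (hF : F.IsHomogeneous d)
    {v : Fin n → K} (hv : v ≠ 0) (h : eval v F = 0) :
    Projectivization.mk K v hv ∈ zeroSet F := by
  obtain ⟨a, ha⟩ := Projectivization.exists_smul_eq_mk_rep K v hv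
  show eval (Projectivization.mk K v hv).rep F = 0
  have hrep : (Projectivization.mk K v hv).rep = (a : K) • v := by
    rw [← ha, Units.smul_def]
  rw [hrep, eval_smul_of_isHomogeneous hF, h, mul_zero]

lemma clPt_mem_zeroSet (φ : K →+* L) {F : MvPolynomial (Fin n) K} {d : ℕ}
    (hF : F.IsHomogeneous d) {P : Projectivization K (Fin n → K)} (hP : P ∈ zeroSet F) :
    clPt φ P ∈ zeroSet (MvPolynomial.map φ F) := by
  apply mk_mem_zeroSet (hF.map φ)
  rw [clVec_eval, hP, map_zero]

/-- The induced map on points of `S` under base change of the field. -/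
def ptMap (φ : K →+* L) {F : MvPolynomial (Fin n) K} {d : ℕ} (hF : F.IsHomogeneous d)
    (P : zeroSet F) : zeroSet (MvPolynomial.map φ F) :=
  ⟨clPt φ P.1, clPt_mem_zeroSet φ hF P.2⟩

/-- A subspace of `L^n` is defined over `K` (w.r.t. `φ : K →+* L`) if it is spanned by
the base change of a `K`-subspace. -/
def DefinedOver (φ : K →+* L) (W : Submodule L (Fin n → L)) : Prop :=
  ∃ W₀ : Submodule K (Fin n → K), W = Submodule.span L (clVec φ '' (W₀ : Set (Fin n → K)))

/-! ### Asymptotic lines, parabolic points, Eckardt points -/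

/-- The line `W` is asymptotic to `F = 0` at `P`: the intersection multiplicity
`(ℓ · S)_P` is at least 3. -/
def AsymptoticAt (F : MvPolynomial (Fin n) K) (W : Submodule K (Fin n → K))
    (P : Projectivization K (Fin n → K)) : Prop :=
  IsLine W ∧ P.rep ∈ W ∧
    ∃ v ∈ W, LinearIndependent K ![P.rep, v] ∧
      ∃ c : K, lineRestrict F P.rep v = C c * (X 1) ^ 3

/-- The set of asymptotic lines at `P`. -/
def AsymSet (F : MvPolynomial (Fin n) K) (P : Projectivization K (Fin n → K)) :
    Set (Submodule K (Fin n → K)) :=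
  {W | AsymptoticAt F W P}

/-- A point of a hypersurface is parabolic (relative to the given field) if it does
not have exactly two distinct asymptotic lines (i.e. it has one or infinitely many). -/
def ParabolicAt (F : MvPolynomial (Fin n) K) (P : Projectivization K (Fin n → K)) : Prop :=
  ¬ ∃ W₁ W₂ : Submodule K (Fin n → K), W₁ ≠ W₂ ∧ AsymSet F P = {W₁, W₂}

/-- An Eckardt point (relative to the given field): three distinct lines lying on the
surface pass through `P`. -/
def EckardtAt (F : MvPolynomial (Fin n) K) (P : Projectivization K (Fin n → K)) : Prop :=
  ∃ W₁ W₂ W₃ : Submodule K (Fin n → K), W₁ ≠ W₂ ∧ W₁ ≠ W₃ ∧ W₂ ≠ W₃ ∧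
    (∀ W ∈ ({W₁, W₂, W₃} : Set (Submodule K (Fin n → K))),
      IsLine W ∧ LineOnSurf F W ∧ OnLine W P)

section geometric

variable (F : MvPolynomial (Fin n) K)

/-- `F` base changed to the algebraic closure of `K`. -/
def clF : MvPolynomial (Fin n) (AlgebraicClosure K) :=
  MvPolynomial.map (algebraMap K (AlgebraicClosure K)) F

/-- A `K`-point of `S` is parabolic (a geometric notion, checked over `K̄`). -/
def IsParabolic (P : Projectivization K (Fin n → K)) : Prop :=
  ParabolicAt (clF F) (clPt (algebraMap K (AlgebraicClosure K)) P)

/-- A `K`-point of `S` is an Eckardt point (a geometric notion, checked over `K̄`). -/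
def IsEckardt (P : Projectivization K (Fin n → K)) : Prop :=
  EckardtAt (clF F) (clPt (algebraMap K (AlgebraicClosure K)) P)

/-- A `K`-point of `S` is `K`-hyperbolic: it has exactly two asymptotic lines over `K̄`,
and both are defined over `K`. -/
def IsHyperbolic (P : Projectivization K (Fin n → K)) : Prop :=
  ∃ W₁ W₂, W₁ ≠ W₂ ∧
    AsymSet (clF F) (clPt (algebraMap K (AlgebraicClosure K)) P) = {W₁, W₂} ∧
    DefinedOver (algebraMap K (AlgebraicClosure K)) W₁ ∧
    DefinedOver (algebraMap K (AlgebraicClosure K)) W₂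

/-- A `K`-point of `S` is `K`-ternary: at least one of the asymptotic lines of `S`
through `P` is defined over `K`. -/
def IsTernary (P : Projectivization K (Fin n → K)) : Prop :=
  ∃ W ∈ AsymSet (clF F) (clPt (algebraMap K (AlgebraicClosure K)) P),
    DefinedOver (algebraMap K (AlgebraicClosure K)) W

end geometric

/-! ### The group `H_S(K)` -/

variable (F : MvPolynomial (Fin n) K)

/-- `G_S(K)`: the free abelian group on the set `S(K)`. -/
abbrev GS := FreeAbelianGroup (zeroSet F)

/-- The degree homomorphism `G_S(K) → ℤ`, `Σ aᵢ Pᵢ ↦ Σ aᵢ`. -/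
def degHom : GS F →+ ℤ := FreeAbelianGroup.lift fun _ => (1 : ℤ)

/-- `P + Q + R` is a "three point sum": either cut out on `S` with multiplicity by a
`K`-line not contained in `S`, or `P`, `Q`, `R` all lie on a `K`-line contained in `S`. -/
def TripleRel (P Q R : zeroSet F) : Prop :=
  ∃ W : Submodule K (Fin n → K), IsLine W ∧
    ((¬ LineOnSurf F W ∧ MeetsIn F W P.1 Q.1 R.1) ∨
      (LineOnSurf F W ∧ OnLine W P.1 ∧ OnLine W Q.1 ∧ OnLine W R.1))

/-- `G'_S(K)`: the subgroup generated by all three point sums. -/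
def Gp : AddSubgroup (GS F) :=
  AddSubgroup.closure {x | ∃ P Q R : zeroSet F, TripleRel F P Q R ∧
    x = FreeAbelianGroup.of P + FreeAbelianGroup.of Q + FreeAbelianGroup.of R}

/-- `G''_S(K)`: the degree-0 part of `G'_S(K)`. -/
def Gpp : AddSubgroup (GS F) := Gp F ⊓ (degHom F).ker

/-- `H_S(K) = G_S(K)/G''_S(K)`. -/
abbrev HS := GS F ⧸ Gpp F

/-- The class `[P] ∈ H_S(K)` of a point `P ∈ S(K)`. -/
def HClass (P : zeroSet F) : HS F := QuotientAddGroup.mk' (Gpp F) (FreeAbelianGroup.of P)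

/-- The degree homomorphism `H_S(K) → ℤ`. -/
def HdegHom : HS F →+ ℤ :=
  QuotientAddGroup.lift (Gpp F) (degHom F) (fun _ hx => hx.2)

/-- `H⁰_S(K)`: the degree-0 part of `H_S(K)`. -/
def H0 : AddSubgroup (HS F) := (HdegHom F).ker

@[simp] lemma HdegHom_HClass (P : zeroSet F) : HdegHom F (HClass F P) = 1 := by
  simp [HdegHom, HClass, degHom]

/-- The class `[P] - [Q]`, as an element of `H⁰_S(K)`. -/
def H0diff (P Q : zeroSet F) : H0 F :=
  ⟨HClass F P - HClass F Q, by simp [H0, AddMonoidHom.mem_ker, map_sub]⟩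

/-! ### mod-`p` dimensions and torsion -/

/-- `A/pA` for an abelian group `A`. -/
abbrev ModP (p : ℕ) (A : Type*) [AddCommGroup A] : Type _ :=
  A ⧸ (AddMonoidHom.range (nsmulAddMonoidHom p : A →+ A))

instance ModP.instModule (p : ℕ) (A : Type*) [AddCommGroup A] : Module (ZMod p) (ModP p A) :=
  QuotientAddGroup.zmodModule (fun x => ⟨x, rfl⟩)

/-- `dim_{F_p} A/pA`. -/
def dimModP (p : ℕ) (A : Type*) [AddCommGroup A] : Cardinal := Module.rank (ZMod p) (ModP p A)

/-- The `k`-torsion subgroup `A[k]` of an abelian group `A`. -/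
def torsion (k : ℕ) (A : Type*) [AddCommGroup A] : AddSubgroup A :=
  (nsmulAddMonoidHom k : A →+ A).ker

instance torsion.instModule (k : ℕ) (A : Type*) [AddCommGroup A] :
    Module (ZMod k) (torsion k A) :=
  AddCommGroup.zmodModule (fun x => Subtype.ext x.2)

/-- `dim_{F_k} A[k]`: the dimension of the `k`-torsion subgroup (for `k` prime). -/
def dimTorsion (k : ℕ) (A : Type*) [AddCommGroup A] : Cardinal :=
  Module.rank (ZMod k) (torsion k A)

/-! ### Topologies -/

/-- The quotient topology on projective space induced by the topology of `K`. -/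
def projTop (K : Type*) [Field K] [TopologicalSpace K] (n : ℕ) :
    TopologicalSpace (Projectivization K (Fin n → K)) :=
  TopologicalSpace.coinduced
    (fun v : {v : Fin n → K // v ≠ 0} => Projectivization.mk K v.1 v.2) inferInstance

/-- The induced topology on the set of `K`-points of `S`. -/
def surfTop (F : MvPolynomial (Fin n) K) [TopologicalSpace K] :
    TopologicalSpace (zeroSet F) :=
  TopologicalSpace.induced Subtype.val (projTop K n)

/-- `K` (a topological field) is a local field: it is isomorphic, as a topological field,
to `ℝ`, to `ℂ`, or to a finite extension of `ℚ_p` for some prime `p` (with its canonical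
topology, namely the `ℚ_p`-vector space topology). -/
def IsLocalField (K : Type*) [Field K] [TopologicalSpace K] : Prop :=
  (∃ e : K ≃+* ℝ, IsHomeomorph e) ∨ (∃ e : K ≃+* ℂ, IsHomeomorph e) ∨
    (∃ (p : ℕ), p.Prime ∧ ∃ (_ : Fact p.Prime) (f : ℚ_[p] →+* K) (m : ℕ)
      (e : K ≃+ (Fin m → ℚ_[p])),
      (∀ (c : ℚ_[p]) (x : K), e (f c * x) = c • e x) ∧ IsHomeomorph e)

end CubicSurf



namespace SkewCub

open Polynomial

/-- The twelve coefficients of a cubic form vanishing on the lines `y = 0` and `x = 0`. -/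
structure Cf (R : Type*) where
  a0 : R
  a1 : R
  a2 : R
  a3 : R
  a4 : R
  a5 : R
  b0 : R
  b1 : R
  b2 : R
  b3 : R
  b4 : R
  b5 : R

namespace Cf

/-- Base change of the coefficients. -/
def map {R S : Type*} [CommRing R] [CommRing S] (φ : R →+* S) (c : Cf R) : Cf S :=
  ⟨φ c.a0, φ c.a1, φ c.a2, φ c.a3, φ c.a4, φ c.a5,
    φ c.b0, φ c.b1, φ c.b2, φ c.b3, φ c.b4, φ c.b5⟩

variable {R : Type*} [CommRing R] (c : Cf R)

def qa0 (x0 x1 : R) : R := c.a0 * x0 ^ 2 + c.a1 * (x0 * x1) + c.a2 * x1 ^ 2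
def qa1 (x0 x1 : R) : R := c.a3 * x0 ^ 2 + c.a4 * (x0 * x1) + c.a5 * x1 ^ 2
def qb0 (y0 y1 : R) : R := c.b0 * y0 ^ 2 + c.b1 * (y0 * y1) + c.b2 * y1 ^ 2
def qb1 (y0 y1 : R) : R := c.b3 * y0 ^ 2 + c.b4 * (y0 * y1) + c.b5 * y1 ^ 2
/-- The part of bidegree `(2,1)`. -/
def A (x0 x1 y0 y1 : R) : R := y0 * c.qa0 x0 x1 + y1 * c.qa1 x0 x1
/-- The part of bidegree `(1,2)`. -/
def B (x0 x1 y0 y1 : R) : R := x0 * c.qb0 y0 y1 + x1 * c.qb1 y0 y1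
/-- The cubic form. -/
def f (x0 x1 y0 y1 : R) : R := c.A x0 x1 y0 y1 + c.B x0 x1 y0 y1
/-- The quintic form whose zeros correspond to the transversals. -/
def D (y0 y1 : R) : R := c.A (c.qb1 y0 y1) (-c.qb0 y0 y1) y0 y1

def SmA : Prop := ∀ x0 x1 : R, c.qa0 x0 x1 = 0 → c.qa1 x0 x1 = 0 → x0 = 0 ∧ x1 = 0
def SmB : Prop := ∀ x0 x1 : R, c.qb0 x0 x1 = 0 → c.qb1 x0 x1 = 0 → x0 = 0 ∧ x1 = 0

end Cf

section closed

variable {L : Type*} [Field L] [IsAlgClosed L]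

lemma exists_quad_root (a b c : L) (h : a ≠ 0) : ∃ t : L, a * t ^ 2 + b * t + c = 0 := by
  obtain ⟨t, ht⟩ := IsAlgClosed.exists_root (Polynomial.C a * Polynomial.X ^ 2 + Polynomial.C b * Polynomial.X + Polynomial.C c)
    (by rw [degree_quadratic h]; decide)
  exact ⟨t, by simpa [IsRoot] using ht⟩

lemma exists_form_root (a b c : L) :
    ∃ x0 x1 : L, ¬ (x0 = 0 ∧ x1 = 0) ∧ a * x0 ^ 2 + b * (x0 * x1) + c * x1 ^ 2 = 0 := by
  by_cases h : a = 0
  · exact ⟨1, 0, by simp, by simp [h]⟩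
  · obtain ⟨t, ht⟩ := exists_quad_root a b c h
    exact ⟨t, 1, by simp, by linear_combination ht⟩

lemma A_ne_closed (c : Cf L) (hA : c.SmA) (y0 y1 : L) (h0 : c.a0 * y0 + c.a3 * y1 = 0)
    (h1 : c.a1 * y0 + c.a4 * y1 = 0) (h2 : c.a2 * y0 + c.a5 * y1 = 0) : y0 = 0 ∧ y1 = 0 := by
  by_contra hy
  by_cases hy1 : y1 = 0
  · have hy0 : y0 ≠ 0 := fun h => hy ⟨h, hy1⟩
    subst hy1
    have e0 : c.a0 = 0 := by simpa [hy0] using h0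
    have e1 : c.a1 = 0 := by simpa [hy0] using h1
    have e2 : c.a2 = 0 := by simpa [hy0] using h2
    obtain ⟨x0, x1, hx, hr⟩ := exists_form_root c.a3 c.a4 c.a5
    exact hx (hA x0 x1 (by simp [Cf.qa0, e0, e1, e2]) hr)
  · obtain ⟨x0, x1, hx, hr⟩ := exists_form_root c.a0 c.a1 c.a2
    refine hx (hA x0 x1 hr ?_)
    have : y1 * c.qa1 x0 x1 = 0 := by
      unfold Cf.qa1
      linear_combination x0 ^ 2 * h0 + x0 * x1 * h1 + x1 ^ 2 * h2 - y0 * hr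
    simpa [hy1] using this

lemma D_ne_closed (c : Cf L) (hA : c.SmA) (hB : c.SmB) : ∃ t : L, c.D 1 t ≠ 0 := by
  by_contra hcon
  push Not at hcon
  set Q1 : L[X] := Polynomial.C c.b3 + Polynomial.C c.b4 * Polynomial.X + Polynomial.C c.b5 * Polynomial.X ^ 2 with hQ1
  set Q0 : L[X] := -(Polynomial.C c.b0 + Polynomial.C c.b1 * Polynomial.X + Polynomial.C c.b2 * Polynomial.X ^ 2) with hQ0
  set G0 : L[X] := Polynomial.C c.a0 * Q1 ^ 2 + Polynomial.C c.a1 * (Q1 * Q0) + Polynomial.C c.a2 * Q0 ^ 2 with hG0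
  set G1 : L[X] := Polynomial.C c.a3 * Q1 ^ 2 + Polynomial.C c.a4 * (Q1 * Q0) + Polynomial.C c.a5 * Q0 ^ 2 with hG1
  have e0 : ∀ t, G0.eval t = c.qa0 (c.qb1 1 t) (-c.qb0 1 t) := by
    intro t; simp [hG0, hQ1, hQ0, Cf.qa0, Cf.qb1, Cf.qb0]
  have e1 : ∀ t, G1.eval t = c.qa1 (c.qb1 1 t) (-c.qb0 1 t) := by
    intro t; simp [hG1, hQ1, hQ0, Cf.qa1, Cf.qb1, Cf.qb0]
  have hP : G0 + Polynomial.X * G1 = 0 := by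
    apply Polynomial.funext
    intro t
    have := hcon t
    simp only [Cf.D, Cf.A] at this
    simp only [Polynomial.eval_add, Polynomial.eval_mul, Polynomial.eval_X, e0, e1, Polynomial.eval_zero]
    linear_combination this
  have hnr : ∀ t, G1.eval t ≠ 0 := by
    intro t ht
    have h0 : G0.eval t = 0 := by
      have := congrArg (Polynomial.eval t) hP
      simpa [ht] using this
    obtain ⟨k1, k0⟩ := hA _ _ ((e0 t).symm.trans h0) ((e1 t).symm.trans ht)
    have := hB 1 t (by simpa using k0) k1
    simp at this
  have hdeg : G1.degree = 0 := by
    by_contra hd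
    obtain ⟨t, ht⟩ := IsAlgClosed.exists_root G1 hd
    exact hnr t ht
  obtain ⟨k, hk⟩ : ∃ k, G1 = Polynomial.C k := ⟨_, eq_C_of_degree_eq_zero hdeg⟩
  have hG0' : G0 = - (Polynomial.C k * Polynomial.X) := by
    rw [hk] at hP
    linear_combination hP
  have d1 : Q1.natDegree ≤ 2 := by rw [hQ1]; compute_degree
  have d0 : Q0.natDegree ≤ 2 := by rw [hQ0]; compute_degree
  have c1 : Q1.coeff 2 = c.b5 := by
    rw [hQ1]; simp [Polynomial.coeff_X, Polynomial.coeff_C]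
  have c0 : Q0.coeff 2 = -c.b2 := by
    rw [hQ0]; simp [Polynomial.coeff_X, Polynomial.coeff_C]
  have m11 : (Q1 * Q1).coeff 4 = c.b5 * c.b5 := by
    rw [show 4 = 2 + 2 from rfl, Polynomial.coeff_mul_add_eq_of_natDegree_le d1 d1, c1]
  have m10 : (Q1 * Q0).coeff 4 = c.b5 * -c.b2 := by
    rw [show 4 = 2 + 2 from rfl, Polynomial.coeff_mul_add_eq_of_natDegree_le d1 d0, c1, c0]
  have m00 : (Q0 * Q0).coeff 4 = -c.b2 * -c.b2 := by
    rw [show 4 = 2 + 2 from rfl, Polynomial.coeff_mul_add_eq_of_natDegree_le d0 d0, c0]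
  have k0 : c.qa0 c.b5 (-c.b2) = 0 := by
    have h1 : G0.coeff 4 = c.qa0 c.b5 (-c.b2) := by
      rw [hG0, pow_two, pow_two, Polynomial.coeff_add, Polynomial.coeff_add, Polynomial.coeff_C_mul, Polynomial.coeff_C_mul, Polynomial.coeff_C_mul,
        m11, m10, m00, Cf.qa0]
      ring
    rw [← h1, hG0']
    simp [Polynomial.coeff_X]
  have k1 : c.qa1 c.b5 (-c.b2) = 0 := by
    have h1 : G1.coeff 4 = c.qa1 c.b5 (-c.b2) := by
      rw [hG1, pow_two, pow_two, Polynomial.coeff_add, Polynomial.coeff_add, Polynomial.coeff_C_mul, Polynomial.coeff_C_mul, Polynomial.coeff_C_mul,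
        m11, m10, m00, Cf.qa1]
      ring
    rw [← h1, hk]
    simp [Polynomial.coeff_C]
  obtain ⟨h5, h2⟩ := hA _ _ k0 k1
  have := hB 0 1 (by simpa [Cf.qb0] using h2) (by simpa [Cf.qb1] using h5)
  simp at this

lemma D_smul {R : Type*} [CommRing R] (c : Cf R) (k y0 y1 : R) :
    c.D (k * y0) (k * y1) = k ^ 5 * c.D y0 y1 := by
  simp only [Cf.D, Cf.A, Cf.qa0, Cf.qa1, Cf.qb0, Cf.qb1]; ring

lemma DT_ne_closed (c : Cf L) (hA : c.SmA) (hB : c.SmB) :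
    ∃ t : L, c.D (c.qa1 1 t) (-c.qa0 1 t) ≠ 0 := by
  by_contra hcon
  push Not at hcon
  obtain ⟨t0, ht0⟩ := D_ne_closed c hA hB
  set Q1 : L[X] := Polynomial.C c.b3 + Polynomial.C c.b4 * Polynomial.X + Polynomial.C c.b5 * Polynomial.X ^ 2 with hQ1
  set Q0 : L[X] := -(Polynomial.C c.b0 + Polynomial.C c.b1 * Polynomial.X + Polynomial.C c.b2 * Polynomial.X ^ 2) with hQ0
  set G0 : L[X] := Polynomial.C c.a0 * Q1 ^ 2 + Polynomial.C c.a1 * (Q1 * Q0) + Polynomial.C c.a2 * Q0 ^ 2 with hG0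
  set G1 : L[X] := Polynomial.C c.a3 * Q1 ^ 2 + Polynomial.C c.a4 * (Q1 * Q0) + Polynomial.C c.a5 * Q0 ^ 2 with hG1
  have e : ∀ t, (G0 + Polynomial.X * G1).eval t = c.D 1 t := by
    intro t; simp [hG0, hG1, hQ1, hQ0, Cf.D, Cf.A, Cf.qa0, Cf.qa1, Cf.qb1, Cf.qb0]
  have hz : (G0 + Polynomial.X * G1) * (Polynomial.C c.a2 + Polynomial.C c.a5 * Polynomial.X) = 0 := by
    apply Polynomial.funext
    intro η
    rw [Polynomial.eval_mul, e]
    simp only [Polynomial.eval_add, Polynomial.eval_mul, Polynomial.eval_C, Polynomial.eval_X, Polynomial.eval_zero]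
    by_cases hl : c.a2 + c.a5 * η = 0
    · rw [hl, mul_zero]
    · obtain ⟨t, ht⟩ := exists_quad_root (c.a2 + c.a5 * η) (c.a1 + c.a4 * η) (c.a0 + c.a3 * η) hl
      have hr : -c.qa0 1 t = c.qa1 1 t * η := by
        simp only [Cf.qa0, Cf.qa1]; linear_combination -ht
      have h1 : c.qa1 1 t ≠ 0 := by
        intro h
        have h' : c.qa0 1 t = 0 := by rw [h, zero_mul] at hr; simpa using hr
        have := hA 1 t h' h
        simp at this
      have := hcon t
      rw [hr] at this
      have h2 := D_smul c (c.qa1 1 t) 1 η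
      rw [mul_one, this] at h2
      have h3 : c.D 1 η = 0 := by
        rcases mul_eq_zero.mp h2.symm with h | h
        · exact absurd (pow_eq_zero_iff (by norm_num) |>.mp h) h1
        · exact h
      rw [h3, zero_mul]
  rcases mul_eq_zero.mp hz with h | h
  · apply ht0; rw [← e, h, Polynomial.eval_zero]
  · have h2 : c.a2 = 0 := by simpa using congrArg (fun p => Polynomial.coeff p 0) h
    have h5 : c.a5 = 0 := by simpa [Polynomial.coeff_C] using congrArg (fun p => Polynomial.coeff p 1) h
    have := hA 0 1 (by simp [Cf.qa0, h2]) (by simp [Cf.qa1, h5])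
    simp at this

end closed

section overK

variable {K : Type*} [Field K]

lemma exists_avoid (hK : 13 ≤ Cardinal.mk K) (p : K[X]) (hp : p ≠ 0) (hd : p.natDegree ≤ 12) :
    ∃ t : K, p.eval t ≠ 0 := by
  classical
  by_contra hcon
  push Not at hcon
  have h1 : (Set.univ : Set K) ⊆ (p.roots.toFinset : Set K) := by
    intro t _
    simp [hp, IsRoot, hcon t]
  have h2 : Cardinal.mk K ≤ (p.roots.toFinset.card : Cardinal) := by
    rw [← Cardinal.mk_univ, ← Cardinal.mk_coe_finset]
    exact Cardinal.mk_le_mk_of_subset h1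
  have h3 : p.roots.toFinset.card ≤ 12 :=
    (Multiset.toFinset_card_le _).trans ((card_roots' p).trans hd)
  have h4 : (13 : Cardinal) ≤ ((12 : ℕ) : Cardinal) :=
    hK.trans (h2.trans (by exact_mod_cast h3))
  have : (13 : ℕ) ≤ 12 := by exact_mod_cast h4
  omega

/-- Geometric smoothness along the two lines. -/
def SmAc (c : Cf K) : Prop := (c.map (algebraMap K (AlgebraicClosure K))).SmA
def SmBc (c : Cf K) : Prop := (c.map (algebraMap K (AlgebraicClosure K))).SmB

lemma SmAc.smA {c : Cf K} (h : SmAc c) : c.SmA := by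
  intro x0 x1 h0 h1
  have := h (algebraMap K _ x0) (algebraMap K _ x1)
    (by simpa [Cf.qa0, Cf.map] using congrArg (algebraMap K (AlgebraicClosure K)) h0)
    (by simpa [Cf.qa1, Cf.map] using congrArg (algebraMap K (AlgebraicClosure K)) h1)
  simpa using this

lemma SmBc.smB {c : Cf K} (h : SmBc c) : c.SmB := by
  intro x0 x1 h0 h1
  have := h (algebraMap K _ x0) (algebraMap K _ x1)
    (by simpa [Cf.qb0, Cf.map] using congrArg (algebraMap K (AlgebraicClosure K)) h0)
    (by simpa [Cf.qb1, Cf.map] using congrArg (algebraMap K (AlgebraicClosure K)) h1)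
  simpa using this

lemma A_ne {c : Cf K} (h : SmAc c) (y0 y1 : K) (h0 : c.a0 * y0 + c.a3 * y1 = 0)
    (h1 : c.a1 * y0 + c.a4 * y1 = 0) (h2 : c.a2 * y0 + c.a5 * y1 = 0) : y0 = 0 ∧ y1 = 0 := by
  have := A_ne_closed _ h (algebraMap K _ y0) (algebraMap K _ y1)
    (by simpa [Cf.map] using congrArg (algebraMap K (AlgebraicClosure K)) h0)
    (by simpa [Cf.map] using congrArg (algebraMap K (AlgebraicClosure K)) h1)
    (by simpa [Cf.map] using congrArg (algebraMap K (AlgebraicClosure K)) h2)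
  simpa using this

/-- Exchange the roles of the two lines. -/
def Cf.swap {R : Type*} (c : Cf R) : Cf R :=
  ⟨c.b0, c.b1, c.b2, c.b3, c.b4, c.b5, c.a0, c.a1, c.a2, c.a3, c.a4, c.a5⟩

lemma B_ne {c : Cf K} (h : SmBc c) (y0 y1 : K) (h0 : c.b0 * y0 + c.b3 * y1 = 0)
    (h1 : c.b1 * y0 + c.b4 * y1 = 0) (h2 : c.b2 * y0 + c.b5 * y1 = 0) : y0 = 0 ∧ y1 = 0 :=
  A_ne (c := c.swap) h y0 y1 h0 h1 h2

lemma natDegree_quad_le (a b e : K) (p q : K[X]) (d : ℕ) (hp : p.natDegree ≤ d)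
    (hq : q.natDegree ≤ d) :
    (Polynomial.C a * p ^ 2 + Polynomial.C b * (p * q) + Polynomial.C e * q ^ 2).natDegree ≤ 2 * d := by
  refine natDegree_add_le_of_degree_le (natDegree_add_le_of_degree_le ?_ ?_) ?_
  · refine (natDegree_C_mul_le _ _).trans (natDegree_pow_le.trans ?_); omega
  · refine (natDegree_C_mul_le _ _).trans (natDegree_mul_le.trans ?_); omega
  · refine (natDegree_C_mul_le _ _).trans (natDegree_pow_le.trans ?_); omega

lemma good_exists (hK : 13 ≤ Cardinal.mk K) {c : Cf K} (hA : SmAc c) (hB : SmBc c)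
    (w : K[X]) (hw : w ≠ 0) (hd : w.natDegree ≤ 2) :
    ∃ t : K, w.eval t ≠ 0 ∧ c.D (c.qa1 1 t) (-c.qa0 1 t) ≠ 0 := by
  set c' : Cf K[X] := c.map Polynomial.C with hc'
  set P : K[X] := c'.D (c'.qa1 1 Polynomial.X) (-c'.qa0 1 Polynomial.X) with hP
  have dX : (Polynomial.X : K[X]).natDegree ≤ 1 := natDegree_X_le
  have d1 : (1 : K[X]).natDegree ≤ 1 := by simp
  have da1 : (c'.qa1 1 Polynomial.X).natDegree ≤ 2 := natDegree_quad_le _ _ _ _ _ 1 d1 dX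
  have da0 : (-c'.qa0 1 Polynomial.X).natDegree ≤ 2 := by
    rw [natDegree_neg]; exact natDegree_quad_le _ _ _ _ _ 1 d1 dX
  have db1 : (c'.qb1 (c'.qa1 1 Polynomial.X) (-c'.qa0 1 Polynomial.X)).natDegree ≤ 4 :=
    natDegree_quad_le _ _ _ _ _ 2 da1 da0
  have db0 : (-c'.qb0 (c'.qa1 1 Polynomial.X) (-c'.qa0 1 Polynomial.X)).natDegree ≤ 4 := by
    rw [natDegree_neg]; exact natDegree_quad_le _ _ _ _ _ 2 da1 da0
  have dP : P.natDegree ≤ 10 := by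
    refine natDegree_add_le_of_degree_le ?_ ?_
    · exact natDegree_mul_le.trans (Nat.add_le_add da1 (natDegree_quad_le _ _ _ _ _ 4 db1 db0))
    · exact natDegree_mul_le.trans (Nat.add_le_add da0 (natDegree_quad_le _ _ _ _ _ 4 db1 db0))
  have hP0 : P ≠ 0 := by
    intro h0
    obtain ⟨t, ht⟩ := DT_ne_closed _ hA hB
    apply ht
    have h := congrArg (Polynomial.eval₂ (algebraMap K (AlgebraicClosure K)) t) h0
    simpa [hP, hc', Cf.D, Cf.A, Cf.qa0, Cf.qa1, Cf.qb0, Cf.qb1, Cf.map, Polynomial.eval₂_add, Polynomial.eval₂_mul,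
      Polynomial.eval₂_pow, Polynomial.eval₂_neg] using h
  obtain ⟨t, ht⟩ := exists_avoid hK (w * P) (mul_ne_zero hw hP0)
    (natDegree_mul_le.trans (Nat.add_le_add hd dP))
  rw [Polynomial.eval_mul] at ht
  refine ⟨t, left_ne_zero_of_mul ht, ?_⟩
  have h := right_ne_zero_of_mul ht
  simpa [hP, hc', Cf.D, Cf.A, Cf.qa0, Cf.qa1, Cf.qb0, Cf.qb1, Cf.map] using h

end overK

end SkewCub


namespace SkewCub

open Polynomial

section geo

variable {K : Type*} [Field K] {V : Type*} [AddCommGroup V] [Module K V]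

/-- Four vectors spanning the space. -/
def Bas (e0 e1 f0 f1 : V) : Prop :=
  ∀ v : V, ∃ x0 x1 y0 y1 : K, v = x0 • e0 + x1 • e1 + y0 • f0 + y1 • f1

/-- A basis adapted to a pair of skew lines on the surface, with the coefficients `c`. -/
structure PC (N : V → K) (e0 e1 f0 f1 : V) (c : Cf K) : Prop where
  bas : Bas (K := K) e0 e1 f0 f1
  form : ∀ x0 x1 y0 y1 : K, N (x0 • e0 + x1 • e1 + y0 • f0 + y1 • f1) = c.f x0 x1 y0 y1
  smA : SmAc c
  smB : SmBc c

/-- The abstract properties of a cubic surface `N = 0` and of a set `M` of points closed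
under secants and tangents. -/
structure Geo (N : V → K) (M : V → Prop) : Prop where
  card : 13 ≤ Cardinal.mk K
  rule : ∀ (p r : V) (α β k : K), k ≠ 0 → (α ≠ 0 ∨ β ≠ 0) →
    (∀ s t : K, N (s • p + t • r) = k * s * t * (β * s - α * t)) → M p → M (α • p + β • r) → M r
  smul : ∀ (k : K) (v : V), k ≠ 0 → M v → M (k • v)
  pair : ∀ e0 e1 f0 f1 : V, Bas (K := K) e0 e1 f0 f1 →
    (∀ s t : K, N (s • e0 + t • e1) = 0) → (∀ s t : K, N (s • f0 + t • f1) = 0) →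
    ∃ c, PC N e0 e1 f0 f1 c

/-- All points of a line are in `M`. -/
def Full (M : V → Prop) (e0 e1 : V) : Prop :=
  ∀ s t : K, (s ≠ 0 ∨ t ≠ 0) → M (s • e0 + t • e1)

variable {N : V → K} {M : V → Prop}

lemma Geo.tan (g : Geo N M) (p r : V) (k : K) (hk : k ≠ 0)
    (h : ∀ s t : K, N (s • p + t • r) = k * s * t ^ 2) (hp : M p) : M r := by
  refine g.rule p r 1 0 (-k) (neg_ne_zero.mpr hk) (Or.inl one_ne_zero) ?_ hp (by simpa using hp)
  intro s t; rw [h]; ring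

lemma Geo.of_smul (g : Geo N M) (k : K) (v : V) (hk : k ≠ 0) (h : M (k • v)) : M v := by
  have := g.smul k⁻¹ _ (inv_ne_zero hk) h
  rwa [smul_smul, inv_mul_cancel₀ hk, one_smul] at this

/-- The plane section is a line and a smooth conic. -/
lemma conic (g : Geo N M) (u0 u1 u2 : V) (b c d e h : K)
    (hN : ∀ z0 z1 z2 : K, N (z0 • u0 + z1 • u1 + z2 • u2) =
      z2 * (b * z0 * z1 + c * z1 ^ 2 + d * z0 * z2 + e * z1 * z2 + h * z2 ^ 2))
    (hdisc : b * d * e - c * d ^ 2 - h * b ^ 2 ≠ 0) (hc : c ≠ 0) (hM : M u0) : M u1 := by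
  have hp : (Polynomial.X * (Polynomial.C b + Polynomial.C d * Polynomial.X) : K[X]) ≠ 0 := by
    refine mul_ne_zero Polynomial.X_ne_zero ?_
    intro h0
    have hb : b = 0 := by simpa using congrArg (fun p => Polynomial.coeff p 0) h0
    have hd : d = 0 := by simpa [Polynomial.coeff_C] using congrArg (fun p => Polynomial.coeff p 1) h0
    apply hdisc; rw [hb, hd]; ring
  obtain ⟨κ, hκ⟩ := exists_avoid g.card _ hp (by
    refine le_trans (b := 2) ?_ (by norm_num)
    compute_degree)
  simp only [Polynomial.eval_mul, Polynomial.eval_X, Polynomial.eval_add, Polynomial.eval_C] at hκ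
  have hκ0 : κ ≠ 0 := left_ne_zero_of_mul hκ
  have hw : b + d * κ ≠ 0 := right_ne_zero_of_mul hκ
  set n := c + e * κ + h * κ ^ 2 with hn
  set w := b + d * κ with hwd
  -- the first point on the conic
  have hT1 : M ((-n) • u0 + w • u1 + (κ * w) • u2) := by
    refine g.tan u0 _ (κ * w * w ^ 2) (by positivity) ?_ hM
    intro s t
    have : s • u0 + t • ((-n) • u0 + w • u1 + (κ * w) • u2)
        = (s - t * n) • u0 + (t * w) • u1 + (t * (κ * w)) • u2 := by module
    rw [this, hN, hn, hwd]; ring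
  set ρ := -b * n + 2 * c * w + e * (κ * w) with hρ
  have hT2 : M ((-c) • ((-n) • u0 + w • u1 + (κ * w) • u2) + ρ • u1) := by
    refine g.tan u0 _ (-c * (κ * w) * ((b * d * e - c * d ^ 2 - h * b ^ 2) * κ ^ 2)) ?_ ?_ hM
    · exact mul_ne_zero (mul_ne_zero (neg_ne_zero.mpr hc) hκ) (mul_ne_zero hdisc (by positivity))
    intro s t
    have : s • u0 + t • ((-c) • ((-n) • u0 + w • u1 + (κ * w) • u2) + ρ • u1)
        = (s + t * (c * n)) • u0 + (t * (-c * w + ρ)) • u1 + (t * (-c * (κ * w))) • u2 := by module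
    rw [this, hN, hρ, hn, hwd]; ring
  refine g.rule _ u1 (-c) ρ (κ * w) hκ (Or.inl (neg_ne_zero.mpr hc)) ?_ hT1 hT2
  intro s t
  have : s • ((-n) • u0 + w • u1 + (κ * w) • u2) + t • u1
      = (-n * s) • u0 + (w * s + t) • u1 + (κ * w * s) • u2 := by module
  rw [this, hN, hρ, hn, hwd]; ring

end geo
end SkewCub


namespace SkewCub

open Polynomial

section geo

variable {K : Type*} [Field K] {V : Type*} [AddCommGroup V] [Module K V]
variable {N : V → K} {M : V → Prop}

lemma exists_ne_zero_one (hK : 13 ≤ Cardinal.mk K) : ∃ t : K, t ≠ 0 ∧ t ≠ 1 := by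
  obtain ⟨t, ht⟩ := exists_avoid hK (Polynomial.X * (Polynomial.X - Polynomial.C 1)) (mul_ne_zero Polynomial.X_ne_zero (Polynomial.X_sub_C_ne_zero 1))
    (by refine le_trans (b := 2) ?_ (by norm_num)
        compute_degree)
  simp only [Polynomial.eval_mul, Polynomial.eval_X, Polynomial.eval_sub, Polynomial.eval_C] at ht
  exact ⟨t, left_ne_zero_of_mul ht, sub_ne_zero.mp (right_ne_zero_of_mul ht)⟩

lemma coeff_unique (hK : 13 ≤ Cardinal.mk K) (u v u' v' : K)
    (h : ∀ s t : K, u * s ^ 2 * t + v * s * t ^ 2 = u' * s ^ 2 * t + v' * s * t ^ 2) :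
    u = u' ∧ v = v' := by
  obtain ⟨t, h0, h1⟩ := exists_ne_zero_one hK
  have e1 := h 1 1
  have e2 := h 1 t
  have e3 : (u - u') * (t * (1 - t)) = 0 := by linear_combination e2 - t ^ 2 * e1
  have e4 : u = u' := by
    rcases mul_eq_zero.mp e3 with h | h
    · exact sub_eq_zero.mp h
    · exact absurd h (mul_ne_zero h0 (sub_ne_zero.mpr h1.symm))
  refine ⟨e4, ?_⟩
  linear_combination e1 - e4

lemma PC.coeff00 (g : Geo N M) {e0 e1 f0 f1 : V} {c : Cf K} (h : PC N e0 e1 f0 f1 c) (u v : K)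
    (hN : ∀ s t : K, N (s • e0 + t • f0) = u * s ^ 2 * t + v * s * t ^ 2) :
    c.a0 = u ∧ c.b0 = v := by
  apply coeff_unique g.card
  intro s t
  have : s • e0 + t • f0 = s • e0 + (0 : K) • e1 + t • f0 + (0 : K) • f1 := by module
  rw [← hN, this, h.form]
  simp only [Cf.f, Cf.A, Cf.B, Cf.qa0, Cf.qa1, Cf.qb0, Cf.qb1]; ring

lemma PC.coeff10 (g : Geo N M) {e0 e1 f0 f1 : V} {c : Cf K} (h : PC N e0 e1 f0 f1 c) (u v : K)
    (hN : ∀ s t : K, N (s • e1 + t • f0) = u * s ^ 2 * t + v * s * t ^ 2) :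
    c.a2 = u ∧ c.b3 = v := by
  apply coeff_unique g.card
  intro s t
  have : s • e1 + t • f0 = (0 : K) • e0 + s • e1 + t • f0 + (0 : K) • f1 := by module
  rw [← hN, this, h.form]
  simp only [Cf.f, Cf.A, Cf.B, Cf.qa0, Cf.qa1, Cf.qb0, Cf.qb1]; ring

lemma PC.lineE {e0 e1 f0 f1 : V} {c : Cf K} (h : PC N e0 e1 f0 f1 c) (s t : K) :
    N (s • e0 + t • e1) = 0 := by
  have : s • e0 + t • e1 = s • e0 + t • e1 + (0 : K) • f0 + (0 : K) • f1 := by module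
  rw [this, h.form]
  simp only [Cf.f, Cf.A, Cf.B, Cf.qa0, Cf.qa1, Cf.qb0, Cf.qb1]; ring

lemma PC.lineF {e0 e1 f0 f1 : V} {c : Cf K} (h : PC N e0 e1 f0 f1 c) (s t : K) :
    N (s • f0 + t • f1) = 0 := by
  have : s • f0 + t • f1 = (0 : K) • e0 + (0 : K) • e1 + s • f0 + t • f1 := by module
  rw [this, h.form]
  simp only [Cf.f, Cf.A, Cf.B, Cf.qa0, Cf.qa1, Cf.qb0, Cf.qb1]; ring

lemma PC.rebase (g : Geo N M) {e0 e1 f0 f1 : V} {c : Cf K} (h : PC N e0 e1 f0 f1 c)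
    (x0 x1 u0 u1 : K) (hd : x0 * u1 - x1 * u0 ≠ 0) :
    ∃ c', PC N (x0 • e0 + x1 • e1) (u0 • e0 + u1 • e1) f0 f1 c' := by
  refine g.pair _ _ _ _ ?_ ?_ h.lineF
  · intro v
    obtain ⟨p0, p1, q0, q1, hv⟩ := h.bas v
    obtain ⟨i, hi⟩ : ∃ i : K, i * (x0 * u1 - x1 * u0) = 1 := ⟨_, inv_mul_cancel₀ hd⟩
    refine ⟨i * (p0 * u1 - p1 * u0), i * (x0 * p1 - x1 * p0), q0, q1, ?_⟩
    rw [hv]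
    match_scalars
    · linear_combination -p0 * hi
    · linear_combination -p1 * hi
    · ring
    · ring
  · intro s t
    rw [← h.lineE (s * x0 + t * u0) (s * x1 + t * u1)]
    congr 1; module

lemma PC.swap (g : Geo N M) {e0 e1 f0 f1 : V} {c : Cf K} (h : PC N e0 e1 f0 f1 c) :
    ∃ c', PC N f0 f1 e0 e1 c' := by
  refine g.pair _ _ _ _ ?_ h.lineF h.lineE
  intro v
  obtain ⟨p0, p1, q0, q1, hv⟩ := h.bas v
  exact ⟨q0, q1, p0, p1, by rw [hv]; module⟩

lemma Full.rebase {e0 e1 : V} (h : Full (K := K) M e0 e1) (x0 x1 u0 u1 : K)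
    (hd : x0 * u1 - x1 * u0 ≠ 0) :
    Full (K := K) M (x0 • e0 + x1 • e1) (u0 • e0 + u1 • e1) := by
  intro s t hst
  have : s • (x0 • e0 + x1 • e1) + t • (u0 • e0 + u1 • e1)
    = (s * x0 + t * u0) • e0 + (s * x1 + t * u1) • e1 := by module
  rw [this]
  apply h
  by_contra hcon
  push Not at hcon
  have h1 : s * (x0 * u1 - x1 * u0) = 0 := by linear_combination u1 * hcon.1 - u0 * hcon.2
  have h2 : t * (x0 * u1 - x1 * u0) = 0 := by linear_combination x0 * hcon.2 - x1 * hcon.1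
  rcases hst with hs | ht
  · exact mul_ne_zero hs hd h1
  · exact mul_ne_zero ht hd h2

/-- Points of the line `e` reached through a smooth residual conic. -/
lemma L1a (g : Geo N M) {e0 e1 f0 f1 : V} {c : Cf K} (h : PC N e0 e1 f0 f1 c)
    (x0 x1 y0 y1 : K) (hx : x0 ≠ 0 ∨ x1 ≠ 0) (hA : c.A x0 x1 y0 y1 = 0) (hD : c.D y0 y1 ≠ 0)
    (hM : M (x0 • e0 + x1 • e1)) (s t : K) (hst : c.A s t y0 y1 ≠ 0) : M (s • e0 + t • e1) := by
  have hδ : x0 * t - x1 * s ≠ 0 := by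
    intro h0
    have k0 : x0 ^ 2 * c.A s t y0 y1 = 0 := by
      simp only [Cf.A, Cf.qa0, Cf.qa1] at hA ⊢
      linear_combination s ^ 2 * hA +
        (y0 * (c.a1 * (x0 * s) + c.a2 * (x0 * t + x1 * s))
          + y1 * (c.a4 * (x0 * s) + c.a5 * (x0 * t + x1 * s))) * h0
    have k1 : x1 ^ 2 * c.A s t y0 y1 = 0 := by
      simp only [Cf.A, Cf.qa0, Cf.qa1] at hA ⊢
      linear_combination t ^ 2 * hA -
        (y0 * (c.a1 * (x1 * t) + c.a0 * (x0 * t + x1 * s))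
          + y1 * (c.a4 * (x1 * t) + c.a3 * (x0 * t + x1 * s))) * h0
    rcases hx with hx | hx
    · exact mul_ne_zero (pow_ne_zero 2 hx) hst k0
    · exact mul_ne_zero (pow_ne_zero 2 hx) hst k1
  refine conic g (x0 • e0 + x1 • e1) (s • e0 + t • e1) (y0 • f0 + y1 • f1)
    (y0 * (2 * c.a0 * x0 * s + c.a1 * (x0 * t + x1 * s) + 2 * c.a2 * x1 * t)
      + y1 * (2 * c.a3 * x0 * s + c.a4 * (x0 * t + x1 * s) + 2 * c.a5 * x1 * t))
    (c.A s t y0 y1) (c.B x0 x1 y0 y1) (c.B s t y0 y1) 0 ?_ ?_ hst hM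
  · intro z0 z1 z2
    have : z0 • (x0 • e0 + x1 • e1) + z1 • (s • e0 + t • e1) + z2 • (y0 • f0 + y1 • f1)
      = (z0 * x0 + z1 * s) • e0 + (z0 * x1 + z1 * t) • e1 + (z2 * y0) • f0 + (z2 * y1) • f1 := by
      module
    rw [this, h.form]
    simp only [Cf.f, Cf.A, Cf.B, Cf.qa0, Cf.qa1, Cf.qb0, Cf.qb1] at hA ⊢
    linear_combination z2 * z0 ^ 2 * hA
  · have : ∀ q0 q1 : K, (y0 * (2 * c.a0 * x0 * s + c.a1 * (x0 * t + x1 * s) + 2 * c.a2 * x1 * t)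
      + y1 * (2 * c.a3 * x0 * s + c.a4 * (x0 * t + x1 * s) + 2 * c.a5 * x1 * t))
      * (x0 * q0 + x1 * q1) * (s * q0 + t * q1) - c.A s t y0 y1 * (x0 * q0 + x1 * q1) ^ 2
      - c.A x0 x1 y0 y1 * (s * q0 + t * q1) ^ 2
      = - ((x0 * t - x1 * s) ^ 2 * c.A q1 (-q0) y0 y1) := by
      intro q0 q1
      simp only [Cf.A, Cf.qa0, Cf.qa1]; ring
    have h2 := this (c.qb0 y0 y1) (c.qb1 y0 y1)
    rw [hA] at h2
    have h3 : -((x0 * t - x1 * s) ^ 2 * c.D y0 y1) ≠ 0 :=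
      neg_ne_zero.mpr (mul_ne_zero (pow_ne_zero 2 hδ) hD)
    intro h0
    apply h3
    rw [← h0, Cf.D, ← h2]
    simp only [Cf.B]; ring

lemma L1 (g : Geo N M) {e0 e1 f0 f1 : V} {c : Cf K} (h : PC N e0 e1 f0 f1 c)
    (x0 x1 y0 y1 : K) (hx : x0 ≠ 0 ∨ x1 ≠ 0) (hA : c.A x0 x1 y0 y1 = 0) (hD : c.D y0 y1 ≠ 0)
    (hM : M (x0 • e0 + x1 • e1)) : Full (K := K) M e0 e1 := by
  set w : K[X] := Polynomial.C (y0 * c.a0 + y1 * c.a3) + Polynomial.C (y0 * c.a1 + y1 * c.a4) * Polynomial.X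
    + Polynomial.C (y0 * c.a2 + y1 * c.a5) * Polynomial.X ^ 2 with hwd
  have hw : w ≠ 0 := by
    intro h0
    have k0 : y0 * c.a0 + y1 * c.a3 = 0 := by
      simpa [hwd, Polynomial.coeff_X, Polynomial.coeff_C, Polynomial.coeff_X_pow] using congrArg (fun p => Polynomial.coeff p 0) h0
    have k1 : y0 * c.a1 + y1 * c.a4 = 0 := by
      simpa [hwd, -map_add, -map_mul, Polynomial.coeff_C, Polynomial.coeff_X_pow] using
        congrArg (fun p => Polynomial.coeff p 1) h0
    have k2 : y0 * c.a2 + y1 * c.a5 = 0 := by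
      simpa [hwd, -map_add, -map_mul, Polynomial.coeff_C, Polynomial.coeff_X, Polynomial.coeff_X_pow] using
        congrArg (fun p => Polynomial.coeff p 2) h0
    obtain ⟨r0, r1⟩ := A_ne h.smA y0 y1 (by linear_combination k0) (by linear_combination k1)
      (by linear_combination k2)
    apply hD; rw [r0, r1]; simp [Cf.D, Cf.A]
  obtain ⟨t1, ht1, hD1⟩ := good_exists g.card h.smA h.smB w hw (by rw [hwd]; compute_degree)
  have ht1' : c.A 1 t1 y0 y1 ≠ 0 := by
    intro h0; apply ht1
    rw [← h0, hwd]
    simp only [Cf.A, Cf.qa0, Cf.qa1, Polynomial.eval_add, Polynomial.eval_mul, Polynomial.eval_C, Polynomial.eval_X, Polynomial.eval_pow]; ring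
  have hM1 := L1a g h x0 x1 y0 y1 hx hA hD hM 1 t1 ht1'
  intro s t hst
  by_cases hc1 : c.A s t y0 y1 = 0
  · by_cases hc2 : c.A s t (c.qa1 1 t1) (-c.qa0 1 t1) = 0
    · exfalso
      have k0 : c.qa0 s t * c.A 1 t1 y0 y1 = 0 := by
        simp only [Cf.A] at hc1 hc2 ⊢
        linear_combination c.qa0 1 t1 * hc1 + y1 * hc2
      have k1 : c.qa1 s t * c.A 1 t1 y0 y1 = 0 := by
        simp only [Cf.A] at hc1 hc2 ⊢
        linear_combination c.qa1 1 t1 * hc1 - y0 * hc2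
      have := h.smA.smA s t ((mul_eq_zero.mp k0).resolve_right ht1')
        ((mul_eq_zero.mp k1).resolve_right ht1')
      tauto
    · refine L1a g h 1 t1 _ _ (Or.inl one_ne_zero) ?_ hD1 hM1 s t hc2
      simp only [Cf.A]; ring
  · exact L1a g h x0 x1 y0 y1 hx hA hD hM s t hc1

end geo
end SkewCub


namespace SkewCub

open Polynomial

section geo

variable {K : Type*} [Field K] {V : Type*} [AddCommGroup V] [Module K V]
variable {N : V → K} {M : V → Prop}

lemma PC.plane {e0 e1 f0 f1 : V} {c : Cf K} (h : PC N e0 e1 f0 f1 c) (ha : c.a0 = 0)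
    (hb : c.b0 = 0) (x0 x1 y0 : K) :
    N (x0 • e0 + x1 • e1 + y0 • f0) = x1 * y0 * (c.a1 * x0 + c.a2 * x1 + c.b3 * y0) := by
  have : x0 • e0 + x1 • e1 + y0 • f0 = x0 • e0 + x1 • e1 + y0 • f0 + (0 : K) • f1 := by module
  rw [this, h.form]
  simp only [Cf.f, Cf.A, Cf.B, Cf.qa0, Cf.qa1, Cf.qb0, Cf.qb1, ha, hb]; ring

lemma PC.b3_ne {e0 e1 f0 f1 : V} {c : Cf K} (h : PC N e0 e1 f0 f1 c) (hb : c.b0 = 0) :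
    c.b3 ≠ 0 := by
  intro h0
  have := h.smB.smB 1 0 (by simp [Cf.qb0, hb]) (by simp [Cf.qb1, h0])
  exact one_ne_zero this.1

lemma PC.a3_ne {e0 e1 f0 f1 : V} {c : Cf K} (h : PC N e0 e1 f0 f1 c) (ha : c.a0 = 0) :
    c.a3 ≠ 0 := by
  intro h0
  have := h.smA.smA 1 0 (by simp [Cf.qa0, ha]) (by simp [Cf.qa1, h0])
  exact one_ne_zero this.1

lemma PC.a12_ne {e0 e1 f0 f1 : V} {c : Cf K} (h : PC N e0 e1 f0 f1 c) (ha : c.a0 = 0) :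
    ¬ (c.a1 = 0 ∧ c.a2 = 0) := by
  rintro ⟨h1, h2⟩
  have := A_ne h.smA 1 0 (by simp [ha]) (by simp [h1]) (by simp [h2])
  exact one_ne_zero this.1

/-- The third line of a tritangent plane is full. -/
lemma L2p (g : Geo N M) {e0 e1 f0 f1 : V} {c : Cf K} (h : PC N e0 e1 f0 f1 c) (ha : c.a0 = 0)
    (hb : c.b0 = 0)
    (hM : ∀ x0 x1 : K, x1 ≠ 0 → c.a1 * x0 + c.a2 * x1 ≠ 0 →
      M ((c.b3 * x0) • e0 + (c.b3 * x1) • e1 - (c.a1 * x0 + c.a2 * x1) • f0)) :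
    ∃ c', PC N (c.b3 • e0 - c.a1 • f0) (c.b3 • e1 - c.a2 • f0) f0 f1 c' ∧
      Full (K := K) M (c.b3 • e0 - c.a1 • f0) (c.b3 • e1 - c.a2 • f0) := by
  have hb3 := h.b3_ne hb
  have ha12 := h.a12_ne ha
  obtain ⟨c', h'⟩ : ∃ c', PC N (c.b3 • e0 - c.a1 • f0) (c.b3 • e1 - c.a2 • f0) f0 f1 c' := by
    refine g.pair _ _ _ _ ?_ ?_ h.lineF
    · intro v
      obtain ⟨p0, p1, q0, q1, hv⟩ := h.bas v
      obtain ⟨i, hi⟩ : ∃ i : K, i * c.b3 = 1 := ⟨_, inv_mul_cancel₀ hb3⟩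
      refine ⟨i * p0, i * p1, q0 + i * p0 * c.a1 + i * p1 * c.a2, q1, ?_⟩
      rw [hv]
      match_scalars
      · linear_combination -p0 * hi
      · linear_combination -p1 * hi
      · ring
      · ring
    · intro s t
      have : s • (c.b3 • e0 - c.a1 • f0) + t • (c.b3 • e1 - c.a2 • f0)
        = (s * c.b3) • e0 + (t * c.b3) • e1 + (-(s * c.a1 + t * c.a2)) • f0 := by module
      rw [this, h.plane ha hb]; ring
  refine ⟨c', h', ?_⟩
  have hw : (Polynomial.X * (Polynomial.C c.a1 + Polynomial.C c.a2 * Polynomial.X) : K[X]) ≠ 0 := by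
    refine mul_ne_zero Polynomial.X_ne_zero ?_
    intro h0
    apply ha12
    exact ⟨by simpa using congrArg (fun p => Polynomial.coeff p 0) h0,
      by simpa [Polynomial.coeff_C] using congrArg (fun p => Polynomial.coeff p 1) h0⟩
  obtain ⟨t, ht, hD⟩ := good_exists g.card h'.smA h'.smB _ hw (by compute_degree)
  simp only [Polynomial.eval_mul, Polynomial.eval_X, Polynomial.eval_add, Polynomial.eval_C] at ht
  refine L1 g h' 1 t _ _ (Or.inl one_ne_zero) (by simp only [Cf.A]; ring) hD ?_
  have := hM 1 t (left_ne_zero_of_mul ht) (by simpa using right_ne_zero_of_mul ht)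
  convert this using 1
  module

lemma L2a (g : Geo N M) {e0 e1 f0 f1 : V} {c : Cf K} (h : PC N e0 e1 f0 f1 c) (ha : c.a0 = 0)
    (hb : c.b0 = 0) (ha1 : c.a1 ≠ 0) (hM : M e0) :
    ∀ x0 x1 : K, x1 ≠ 0 → c.a1 * x0 + c.a2 * x1 ≠ 0 →
      M ((c.b3 * x0) • e0 + (c.b3 * x1) • e1 - (c.a1 * x0 + c.a2 * x1) • f0) := by
  intro x0 x1 hx1 hw
  have hb3 := h.b3_ne hb
  refine g.tan e0 _ (-(c.b3 * x1 * (c.a1 * x0 + c.a2 * x1) * c.a1)) ?_ ?_ hM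
  · exact neg_ne_zero.mpr (mul_ne_zero (mul_ne_zero (mul_ne_zero hb3 hx1) hw) ha1)
  · intro s t
    have : s • e0 + t • ((c.b3 * x0) • e0 + (c.b3 * x1) • e1 - (c.a1 * x0 + c.a2 * x1) • f0)
      = (s + t * (c.b3 * x0)) • e0 + (t * (c.b3 * x1)) • e1
        + (-(t * (c.a1 * x0 + c.a2 * x1))) • f0 := by module
    rw [this, h.plane ha hb]; ring

lemma L2bpts (g : Geo N M) {e0 e1 f0 f1 : V} {c : Cf K} (h : PC N e0 e1 f0 f1 c) (ha : c.a0 = 0)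
    (hb : c.b0 = 0) (ha1 : c.a1 ≠ 0) (hM : M (c.a2 • e0 - c.a1 • e1)) (t : K) (ht : t ≠ 0)
    (ht' : c.a1 + c.b3 * t ≠ 0) : M (e0 + t • f0) := by
  refine g.tan _ _ (-(c.a1 * t * (c.a1 + c.b3 * t))) ?_ ?_ hM
  · exact neg_ne_zero.mpr (mul_ne_zero (mul_ne_zero ha1 ht) ht')
  · intro s u
    have : s • (c.a2 • e0 - c.a1 • e1) + u • (e0 + t • f0)
      = (s * c.a2 + u) • e0 + (-(s * c.a1)) • e1 + (u * t) • f0 := by module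
    rw [this, h.plane ha hb]; ring

lemma L2b (g : Geo N M) {e0 e1 f0 f1 : V} {c : Cf K} (h : PC N e0 e1 f0 f1 c) (ha : c.a0 = 0)
    (hb : c.b0 = 0) (hM : ∀ t : K, t ≠ 0 → c.a1 + c.b3 * t ≠ 0 → M (e0 + t • f0)) : M e0 := by
  have hb3 := h.b3_ne hb
  have ha3 := h.a3_ne ha
  obtain ⟨h3, hh3⟩ : ∃ h3 : K, h3 = c.b1 * c.b2 * c.b4 - c.b3 * c.b2 ^ 2 - c.b5 * c.b1 ^ 2 :=
    ⟨_, rfl⟩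
  have h3ne : h3 ≠ 0 := by
    intro h0
    rw [hh3] at h0
    have k := h.smB.smB c.b2 (-c.b1) (by simp only [Cf.qb0, hb]; ring)
      (by simp only [Cf.qb1]; linear_combination -h0)
    have := B_ne h.smB 1 0 (by simp [hb]) (by simpa using k.2) (by simpa using k.1)
    exact one_ne_zero this.1
  obtain ⟨r0, hr0⟩ : ∃ r0 : K, r0 = c.a1 * c.a4 * c.a2 - c.a3 * c.a2 ^ 2 - c.a5 * c.a1 ^ 2 :=
    ⟨_, rfl⟩
  obtain ⟨r1, hr1⟩ : ∃ r1 : K, r1 = 4 * c.a3 * c.b3 * c.a5 + c.a1 * c.a4 * c.b4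
    + c.a1 * c.b2 * c.a2 + c.b1 * c.a4 * c.a2 - 2 * c.a3 * c.a2 * c.b4 - c.b3 * c.a4 ^ 2
    - 2 * c.a5 * c.a1 * c.b1 - c.b5 * c.a1 ^ 2 := ⟨_, rfl⟩
  obtain ⟨r2, hr2⟩ : ∃ r2 : K, r2 = 4 * c.a3 * c.b3 * c.b5 + c.a1 * c.b2 * c.b4
    + c.b1 * c.a4 * c.b4 + c.b1 * c.b2 * c.a2 - c.a3 * c.b4 ^ 2 - 2 * c.b3 * c.a4 * c.b2
    - c.a5 * c.b1 ^ 2 - 2 * c.b5 * c.a1 * c.b1 := ⟨_, rfl⟩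
  set pα : K[X] := Polynomial.C c.a3 + Polynomial.C c.b1 * Polynomial.X with hpα
  set pβ : K[X] := -(Polynomial.X * (Polynomial.C c.a1 + Polynomial.C c.b3 * Polynomial.X)) with hpβ
  set Q : K[X] := Polynomial.C r0 * pα ^ 2 + Polynomial.C r1 * (pα * pβ) + Polynomial.C r2 * pβ ^ 2 with hQ
  set H : K[X] := Polynomial.C h3 * pβ ^ 3 + pα * Q with hH
  have dα : pα.natDegree ≤ 1 := by rw [hpα]; compute_degree
  have dβ : pβ.natDegree ≤ 2 := by rw [hpβ]; compute_degree
  have dQ : Q.natDegree ≤ 4 := natDegree_quad_le _ _ _ _ _ 2 (dα.trans one_le_two) dβ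
  have dαQ : (pα * Q).natDegree ≤ 5 := natDegree_mul_le.trans (by omega)
  have dβ3 : (pβ ^ 3).natDegree ≤ 6 := natDegree_pow_le.trans (by omega)
  have dH : H.natDegree ≤ 6 :=
    natDegree_add_le_of_degree_le ((natDegree_C_mul_le _ _).trans dβ3) (dαQ.trans (by norm_num))
  have cβ : pβ.coeff 2 = -c.b3 := by
    have : pβ = Polynomial.C (-c.a1) * Polynomial.X + Polynomial.C (-c.b3) * Polynomial.X ^ 2 := by rw [hpβ]; simp only [Polynomial.C_neg]; ring
    rw [this]; simp [Polynomial.coeff_X, -Polynomial.C_neg, -map_neg]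
  have hβ0 : pβ ≠ 0 := by
    intro h0; rw [h0] at cβ; simp at cβ; exact hb3 cβ
  have hα0 : pα ≠ 0 := by
    intro h0
    apply ha3
    simpa [hpα] using congrArg (fun p => Polynomial.coeff p 0) h0
  have hH0 : H ≠ 0 := by
    intro h0
    have k : H.coeff 6 = h3 * (-c.b3) ^ 3 := by
      rw [hH, Polynomial.coeff_add, Polynomial.coeff_eq_zero_of_natDegree_lt (p := pα * Q) (by omega), Polynomial.coeff_C_mul,
        add_zero, ← cβ]
      congr 1
      exact Polynomial.coeff_pow_of_natDegree_le (m := 3) dβ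
    rw [h0] at k
    simp [h3ne, hb3] at k
  obtain ⟨t, ht⟩ := exists_avoid g.card (pα * pβ * H) (mul_ne_zero (mul_ne_zero hα0 hβ0) hH0)
    (natDegree_mul_le.trans (by
      have := natDegree_mul_le (p := pα) (q := pβ)
      omega))
  simp only [Polynomial.eval_mul] at ht
  have hα := left_ne_zero_of_mul (left_ne_zero_of_mul ht)
  have hβ := right_ne_zero_of_mul (left_ne_zero_of_mul ht)
  have hHt := right_ne_zero_of_mul ht
  have eα : pα.eval t = c.a3 + c.b1 * t := by simp [hpα]
  have eβ : pβ.eval t = -(t * (c.a1 + c.b3 * t)) := by simp [hpβ]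
  have eH : H.eval t = h3 * pβ.eval t ^ 3 + pα.eval t * (r0 * pα.eval t ^ 2
    + r1 * (pα.eval t * pβ.eval t) + r2 * pβ.eval t ^ 2) := by simp [hH, hQ]
  rw [eH] at hHt
  obtain ⟨α, hαd⟩ : ∃ α, α = pα.eval t := ⟨_, rfl⟩
  obtain ⟨β, hβd⟩ : ∃ β, β = pβ.eval t := ⟨_, rfl⟩
  rw [← hαd] at eα hα hHt
  rw [← hβd] at eβ hβ hHt
  have ht0 : t ≠ 0 := by
    intro h0; apply hβ; rw [eβ, h0]; ring
  have ht1 : c.a1 + c.b3 * t ≠ 0 := by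
    intro h0; apply hβ; rw [eβ, h0]; ring
  refine conic g (e0 + t • f0) e0 (α • e1 + β • f1)
    (2 * c.a3 * β + (c.a1 * α + c.b1 * β) * t) (c.a3 * β)
    (c.a4 * α * β + c.b2 * β ^ 2 + t * (c.b4 * α * β + c.a2 * α ^ 2))
    (c.a4 * α * β + c.b2 * β ^ 2) (c.a5 * α ^ 2 * β + c.b5 * α * β ^ 2) ?_ ?_
    (mul_ne_zero ha3 hβ) (hM t ht0 ht1)
  · intro z0 z1 z2
    have : z0 • (e0 + t • f0) + z1 • e0 + z2 • (α • e1 + β • f1)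
      = (z0 + z1) • e0 + (z2 * α) • e1 + (z0 * t) • f0 + (z2 * β) • f1 := by module
    rw [this, h.form]
    simp only [Cf.f, Cf.A, Cf.B, Cf.qa0, Cf.qa1, Cf.qb0, Cf.qb1, ha, hb]
    rw [eα, eβ]
    ring
  · have key : (2 * c.a3 * β + (c.a1 * α + c.b1 * β) * t)
        * (c.a4 * α * β + c.b2 * β ^ 2 + t * (c.b4 * α * β + c.a2 * α ^ 2))
        * (c.a4 * α * β + c.b2 * β ^ 2) - c.a3 * β *
        (c.a4 * α * β + c.b2 * β ^ 2 + t * (c.b4 * α * β + c.a2 * α ^ 2)) ^ 2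
        - (c.a5 * α ^ 2 * β + c.b5 * α * β ^ 2) *
          (2 * c.a3 * β + (c.a1 * α + c.b1 * β) * t) ^ 2
        = t ^ 2 * α * β * (h3 * β ^ 3 + α * (r0 * α ^ 2 + r1 * (α * β) + r2 * β ^ 2)) := by
      rw [hh3, hr0, hr1, hr2, eα, eβ]
      ring
    rw [key]
    exact mul_ne_zero (mul_ne_zero (mul_ne_zero (pow_ne_zero 2 ht0) hα) hβ) hHt

end geo
end SkewCub


namespace SkewCub

open Polynomial

section geo

variable {K : Type*} [Field K] {V : Type*} [AddCommGroup V] [Module K V]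
variable {N : V → K} {M : V → Prop}

lemma exists_compl {x0 x1 : K} (hx : x0 ≠ 0 ∨ x1 ≠ 0) : ∃ u0 u1 : K, x0 * u1 - x1 * u0 ≠ 0 := by
  rcases hx with h | h
  · exact ⟨0, 1, by simpa using h⟩
  · exact ⟨1, 0, by simpa using h⟩

lemma PC.rebaseF (g : Geo N M) {e0 e1 f0 f1 : V} {c : Cf K} (h : PC N e0 e1 f0 f1 c)
    (x0 x1 u0 u1 : K) (hd : x0 * u1 - x1 * u0 ≠ 0) :
    ∃ c', PC N e0 e1 (x0 • f0 + x1 • f1) (u0 • f0 + u1 • f1) c' := by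
  obtain ⟨c1, h1⟩ := h.swap g
  obtain ⟨c2, h2⟩ := h1.rebase g x0 x1 u0 u1 hd
  exact h2.swap g

/-- From a point of the first line to a full line meeting the situation again. -/
lemma L6 (g : Geo N M) {e0 e1 f0 f1 : V} {c : Cf K} (h : PC N e0 e1 f0 f1 c) (ha : c.a0 = 0)
    (hne : ¬ (c.b0 = 0 ∧ c.a1 = 0)) (hM : M e0) :
    ∃ n0 n1 c', PC N n0 n1 f0 f1 c' ∧ Full (K := K) M n0 n1 := by
  have hDe : c.D 1 0 = c.b0 * (c.a2 * c.b0 - c.a1 * c.b3) := by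
    simp only [Cf.D, Cf.A, Cf.qa0, Cf.qa1, Cf.qb0, Cf.qb1, ha]; ring
  by_cases hD : c.D 1 0 = 0
  · by_cases hb : c.b0 = 0
    · have ha1 : c.a1 ≠ 0 := fun h0 => hne ⟨hb, h0⟩
      obtain ⟨c', h1, h2⟩ := L2p g h ha hb (L2a g h ha hb ha1 hM)
      exact ⟨_, _, c', h1, h2⟩
    · have hr : c.a2 * c.b0 - c.a1 * c.b3 = 0 := by
        rw [hDe] at hD; exact (mul_eq_zero.mp hD).resolve_left hb
      obtain ⟨c', h'⟩ := h.rebase g c.b3 (-c.b0) 1 0 (by simpa using hb)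
      have k0 := h'.coeff00 g 0 0 (by
        intro s t
        have : s • (c.b3 • e0 + (-c.b0) • e1) + t • f0
          = (s * c.b3) • e0 + (-(s * c.b0)) • e1 + t • f0 + (0 : K) • f1 := by module
        rw [this, h.form]
        simp only [Cf.f, Cf.A, Cf.B, Cf.qa0, Cf.qa1, Cf.qb0, Cf.qb1, ha]
        linear_combination t * s ^ 2 * c.b0 * hr)
      have k1 := h'.coeff10 g 0 c.b0 (by
        intro s t
        have : s • ((1 : K) • e0 + (0 : K) • e1) + t • f0
          = s • e0 + (0 : K) • e1 + t • f0 + (0 : K) • f1 := by module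
        rw [this, h.form]
        simp only [Cf.f, Cf.A, Cf.B, Cf.qa0, Cf.qa1, Cf.qb0, Cf.qb1, ha]
        ring)
      have ha1 : c'.a1 ≠ 0 := fun h0 => h'.a12_ne k0.1 ⟨h0, k1.1⟩
      have hM1 : M (c'.a2 • (c.b3 • e0 + (-c.b0) • e1) - c'.a1 • ((1 : K) • e0 + (0 : K) • e1)) := by
        have := g.smul (-c'.a1) _ (neg_ne_zero.mpr ha1) hM
        rw [k1.1]
        convert this using 1
        module
      have hM2 := L2b g h' k0.1 k0.2 (L2bpts g h' k0.1 k0.2 ha1 hM1)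
      obtain ⟨c', h1, h2⟩ := L2p g h' k0.1 k0.2 (L2a g h' k0.1 k0.2 ha1 hM2)
      exact ⟨_, _, c', h1, h2⟩
  · refine ⟨e0, e1, c, h, L1 g h 1 0 1 0 (Or.inl one_ne_zero) ?_ hD (by simpa using hM)⟩
    simp [Cf.A, Cf.qa0, ha]

lemma IIIcore (g : Geo N M) {e0 e1 f0 f1 : V} {c : Cf K} (h : PC N e0 e1 f0 f1 c)
    (hE : Full (K := K) M e0 e1) (hF : Full (K := K) M f0 f1) (hv : N (e0 + f0) = 0) :
    M (e0 + f0) := by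
  have hab : c.a0 + c.b0 = 0 := by
    have : e0 + f0 = (1 : K) • e0 + (0 : K) • e1 + (1 : K) • f0 + (0 : K) • f1 := by module
    rw [this, h.form] at hv
    simp only [Cf.f, Cf.A, Cf.B, Cf.qa0, Cf.qa1, Cf.qb0, Cf.qb1] at hv
    linear_combination hv
  have hMe : M e0 := by simpa using hE 1 0 (Or.inl one_ne_zero)
  have hMf : M f0 := by simpa using hF 1 0 (Or.inl one_ne_zero)
  by_cases ha : c.a0 = 0
  · have hb : c.b0 = 0 := by linear_combination hab - ha
    have hb3 := h.b3_ne hb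
    have ha12 := h.a12_ne ha
    obtain ⟨c', -, hG⟩ := L2p g h ha hb (by
      intro x0 x1 hx1 hw
      refine g.rule (x0 • e0 + x1 • e1) _ (-c.b3) 1 (-(x1 * (c.a1 * x0 + c.a2 * x1) ^ 2))
        (neg_ne_zero.mpr (mul_ne_zero hx1 (pow_ne_zero 2 hw))) (Or.inr one_ne_zero) ?_
        (hE _ _ (Or.inr hx1)) ?_
      · intro s t
        have : s • (x0 • e0 + x1 • e1)
            + t • ((c.b3 * x0) • e0 + (c.b3 * x1) • e1 - (c.a1 * x0 + c.a2 * x1) • f0)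
          = ((s + t * c.b3) * x0) • e0 + ((s + t * c.b3) * x1) • e1
            + (-(t * (c.a1 * x0 + c.a2 * x1))) • f0 := by module
        rw [this, h.plane ha hb]; ring
      · have := g.smul _ _ (neg_ne_zero.mpr hw) hMf
        convert this using 1
        module)
    by_cases h1 : c.a1 + c.b3 = 0
    · have := hG 1 0 (Or.inl one_ne_zero)
      apply g.of_smul c.b3 _ hb3
      convert this using 1
      have : c.a1 = -c.b3 := by linear_combination h1
      rw [this]; module
    · obtain ⟨n0, hn0⟩ : ∃ n0 : K, c.a1 * n0 + c.a2 ≠ 0 := by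
        by_cases h2 : c.a2 = 0
        · exact ⟨1, fun h0 => ha12 ⟨by simpa [h2] using h0, h2⟩⟩
        · exact ⟨0, by simpa using h2⟩
      refine g.rule (n0 • e0 + (1 : K) • e1) _ (-(c.a1 + c.b3)) (c.a1 * n0 + c.a2) 1 one_ne_zero
        (Or.inr hn0) ?_ (hE _ _ (Or.inr one_ne_zero)) ?_
      · intro s t
        have : s • (n0 • e0 + (1 : K) • e1) + t • (e0 + f0)
          = (s * n0 + t) • e0 + s • e1 + t • f0 := by module
        rw [this, h.plane ha hb]; ring
      · have := hG (c.a2 - c.b3 * n0) (-(c.a1 + c.b3)) (Or.inr (neg_ne_zero.mpr h1))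
        apply g.of_smul c.b3 _ hb3
        convert this using 1
        module
  · refine g.rule e0 _ (-1) 1 c.a0 ha (Or.inr one_ne_zero) ?_ hMe ?_
    · intro s t
      have : s • e0 + t • (e0 + f0)
        = (s + t) • e0 + (0 : K) • e1 + t • f0 + (0 : K) • f1 := by module
      rw [this, h.form]
      simp only [Cf.f, Cf.A, Cf.B, Cf.qa0, Cf.qa1, Cf.qb0, Cf.qb1]
      linear_combination (s + t) * t ^ 2 * hab
    · convert hMf using 1
      module

lemma III (g : Geo N M) {e0 e1 f0 f1 : V} {c : Cf K} (h : PC N e0 e1 f0 f1 c)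
    (hE : Full (K := K) M e0 e1) (hF : Full (K := K) M f0 f1) (v : V) (hv0 : v ≠ 0)
    (hv : N v = 0) : M v := by
  obtain ⟨x0, x1, y0, y1, rfl⟩ := h.bas v
  by_cases hx : x0 ≠ 0 ∨ x1 ≠ 0
  · by_cases hy : y0 ≠ 0 ∨ y1 ≠ 0
    · obtain ⟨u0, u1, hu⟩ := exists_compl hx
      obtain ⟨w0, w1, hw⟩ := exists_compl hy
      obtain ⟨c1, h1⟩ := h.rebase g _ _ _ _ hu
      obtain ⟨c2, h2⟩ := h1.rebaseF g _ _ _ _ hw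
      have := IIIcore g h2 (hE.rebase _ _ _ _ hu) (hF.rebase _ _ _ _ hw)
        (by rw [← hv]; congr 1; module)
      convert this using 1
      module
    · push Not at hy
      rw [hy.1, hy.2]
      convert hE x0 x1 hx using 1
      module
  · push Not at hx
    rw [hx.1, hx.2]
    have hy : y0 ≠ 0 ∨ y1 ≠ 0 := by
      by_contra hy
      push Not at hy
      apply hv0
      rw [hx.1, hx.2, hy.1, hy.2]; module
    convert hF y0 y1 hy using 1
    module

lemma L3 (g : Geo N M) {e0 e1 f0 f1 : V} {c : Cf K} (h : PC N e0 e1 f0 f1 c)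
    (hE : Full (K := K) M e0 e1) (v : V) (hv0 : v ≠ 0) (hv : N v = 0) : M v := by
  obtain ⟨t, -, hD⟩ := good_exists g.card h.smA h.smB 1 one_ne_zero (by simp)
  have hA : c.A 1 t (c.qa1 1 t) (-c.qa0 1 t) = 0 := by simp only [Cf.A]; ring
  generalize c.qa1 1 t = y0 at hD hA
  generalize -c.qa0 1 t = y1 at hD hA
  have hB : c.B 1 t y0 y1 ≠ 0 := by
    intro h0
    apply hD
    have k : c.qb0 y0 y1 = -t * c.qb1 y0 y1 := by
      simp only [Cf.B] at h0
      linear_combination h0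
    rw [Cf.D, k]
    generalize c.qb1 y0 y1 = q
    simp only [Cf.A, Cf.qa0, Cf.qa1] at hA ⊢
    linear_combination q ^ 2 * hA
  have hMy : M (y0 • f0 + y1 • f1) := by
    refine g.tan ((1 : K) • e0 + t • e1) _ _ hB ?_ (hE 1 t (Or.inl one_ne_zero))
    intro s u
    have : s • ((1 : K) • e0 + t • e1) + u • (y0 • f0 + y1 • f1)
      = s • e0 + (s * t) • e1 + (u * y0) • f0 + (u * y1) • f1 := by module
    rw [this, h.form]
    simp only [Cf.f, Cf.A, Cf.B, Cf.qa0, Cf.qa1, Cf.qb0, Cf.qb1] at hA ⊢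
    linear_combination s ^ 2 * u * hA
  have hy : y0 ≠ 0 ∨ y1 ≠ 0 := by
    by_contra hy
    push Not at hy
    apply hD; rw [hy.1, hy.2]; simp [Cf.D, Cf.A]
  have hq : c.qb1 y0 y1 ≠ 0 ∨ -c.qb0 y0 y1 ≠ 0 := by
    by_contra hq
    push Not at hq
    apply hD; rw [Cf.D, hq.1, hq.2]; simp [Cf.A, Cf.qa0, Cf.qa1]
  obtain ⟨u0, u1, hu⟩ := exists_compl hq
  obtain ⟨w0, w1, hw⟩ := exists_compl hy
  obtain ⟨c1, h1⟩ := h.rebase g _ _ _ _ hu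
  obtain ⟨c2, h2⟩ := h1.rebaseF g _ _ _ _ hw
  obtain ⟨c3, h3⟩ := h2.swap g
  have k := h3.coeff00 g 0 (c.D y0 y1) (by
    intro s r
    have : s • (y0 • f0 + y1 • f1) + r • (c.qb1 y0 y1 • e0 + (-c.qb0 y0 y1) • e1)
      = (r * c.qb1 y0 y1) • e0 + (r * (-c.qb0 y0 y1)) • e1 + (s * y0) • f0 + (s * y1) • f1 := by
      module
    rw [this, h.form]
    simp only [Cf.f, Cf.D, Cf.A, Cf.B, Cf.qa0, Cf.qa1, Cf.qb0, Cf.qb1]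
    ring)
  obtain ⟨n0, n1, c4, h4, hn⟩ := L6 g h3 k.1 (fun h0 => hD (k.2 ▸ h0.1)) hMy
  exact III g h4 hn (hE.rebase _ _ _ _ hu) v hv0 hv

theorem abstract_main (g : Geo N M) {e0 e1 f0 f1 : V} {c : Cf K} (h : PC N e0 e1 f0 f1 c)
    (ha : c.a0 = 0) (hne : ¬ (c.b0 = 0 ∧ c.a1 = 0)) (hM : M e0) (v : V) (hv0 : v ≠ 0)
    (hv : N v = 0) : M v := by
  obtain ⟨n0, n1, c4, h4, hn⟩ := L6 g h ha hne hM
  exact L3 g h4 hn v hv0 hv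

end geo
end SkewCub


namespace SkewCub

open CubicSurf

section conc

universe u

lemma monomial_three {K : Type u} [Field K] {n : ℕ} (s : Fin n →₀ ℕ) (a : K)
    (hs : s.degree = 3) :
    ∃ i j k, MvPolynomial.monomial s a = MvPolynomial.C a * MvPolynomial.X i * MvPolynomial.X j
      * MvPolynomial.X k := by
  have h1 : s.toMultiset.card = 3 := by
    rw [Finsupp.card_toMultiset, ← hs, Finsupp.degree_eq_sum, Finsupp.sum_fintype]
    · rfl
    · intro i; rfl
  obtain ⟨i, j, k, h2⟩ := Multiset.card_eq_three.mp h1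
  refine ⟨i, j, k, ?_⟩
  have h3 : s = Finsupp.single i 1 + Finsupp.single j 1 + Finsupp.single k 1 := by
    rw [← Finsupp.toMultiset_toFinsupp s, h2]
    ext l
    simp [Multiset.toFinsupp, Multiset.count_cons, Finsupp.single_apply, Multiset.count_singleton]
    simp only [eq_comm (a := l)]
    ring
  rw [h3, MvPolynomial.monomial_eq, Finsupp.prod_add_index', Finsupp.prod_add_index']
  · simp [mul_assoc]
  all_goals simp [pow_add]

lemma expand {K : Type u} [Field K] {n m : ℕ} (F : MvPolynomial (Fin n) K)
    (hF : F.IsHomogeneous 3) (b : Fin m → Fin n → K) :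
    ∃ t : Fin m → Fin m → Fin m → K, ∀ (R : Type u) [CommRing R] [Algebra K R] (z : Fin m → R),
      MvPolynomial.aeval (fun i => ∑ p, z p * algebraMap K R (b p i)) F
        = ∑ p, ∑ q, ∑ r, algebraMap K R (t p q r) * z p * z q * z r := by
  classical
  have key : ∀ s : Fin n →₀ ℕ, s ∈ F.support → ∃ t : Fin m → Fin m → Fin m → K,
      ∀ (R : Type u) [CommRing R] [Algebra K R] (z : Fin m → R),
      MvPolynomial.aeval (fun i => ∑ p, z p * algebraMap K R (b p i))
        (MvPolynomial.monomial s (F.coeff s))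
        = ∑ p, ∑ q, ∑ r, algebraMap K R (t p q r) * z p * z q * z r := by
    intro s hs
    obtain ⟨i, j, k, h⟩ := monomial_three s (F.coeff s) (by
      have := hF (MvPolynomial.mem_support_iff.mp hs)
      rw [Finsupp.degree_eq_weight_one]; exact this)
    refine ⟨fun p q r => F.coeff s * b p i * b q j * b r k, ?_⟩
    intro R _ _ z
    rw [h]
    simp only [map_mul, MvPolynomial.aeval_X, MvPolynomial.aeval_C]
    rw [mul_assoc, mul_assoc, Finset.sum_mul_sum, Finset.sum_mul_sum, Finset.mul_sum]
    refine Finset.sum_congr rfl fun p _ => ?_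
    rw [Finset.mul_sum]
    simp only [Finset.mul_sum]
    refine Finset.sum_congr rfl fun q _ => Finset.sum_congr rfl fun r _ => ?_
    ring
  choose! t ht using key
  refine ⟨fun p q r => ∑ s ∈ F.support, t s p q r, ?_⟩
  intro R _ _ z
  conv_lhs => rw [F.as_sum]
  rw [map_sum, Finset.sum_congr rfl (fun s hs => ht s hs R z)]
  rw [Finset.sum_comm]
  refine Finset.sum_congr rfl fun p _ => ?_
  rw [Finset.sum_comm]
  refine Finset.sum_congr rfl fun q _ => ?_
  rw [Finset.sum_comm]
  refine Finset.sum_congr rfl fun r _ => ?_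
  rw [map_sum, Finset.sum_mul, Finset.sum_mul, Finset.sum_mul]

lemma binary {K : Type u} [Field K] {n : ℕ} (F : MvPolynomial (Fin n) K)
    (hF : F.IsHomogeneous 3) (u v : Fin n → K) :
    ∃ q0 q1 q2 q3 : K, ∀ (R : Type u) [CommRing R] [Algebra K R] (s t : R),
      MvPolynomial.aeval (fun i => s * algebraMap K R (u i) + t * algebraMap K R (v i)) F
        = algebraMap K R q0 * s ^ 3 + algebraMap K R q1 * s ^ 2 * t
          + algebraMap K R q2 * s * t ^ 2 + algebraMap K R q3 * t ^ 3 := by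
  obtain ⟨t, ht⟩ := expand F hF ![u, v]
  refine ⟨t 0 0 0, t 0 0 1 + t 0 1 0 + t 1 0 0, t 0 1 1 + t 1 0 1 + t 1 1 0, t 1 1 1, ?_⟩
  intro R _ _ x y
  have := ht R ![x, y]
  simp only [Fin.sum_univ_two] at this
  simp only [Matrix.cons_val_zero, Matrix.cons_val_one] at this
  rw [this]
  simp only [map_add]
  ring

lemma binary_zero {K : Type u} [Field K] (hK : 13 ≤ Cardinal.mk K) (q0 q1 q2 q3 : K)
    (h : ∀ s t : K, q0 * s ^ 3 + q1 * s ^ 2 * t + q2 * s * t ^ 2 + q3 * t ^ 3 = 0) :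
    q0 = 0 ∧ q1 = 0 ∧ q2 = 0 ∧ q3 = 0 := by
  have h0 : q0 = 0 := by simpa using h 1 0
  have h3 : q3 = 0 := by simpa using h 0 1
  have := coeff_unique hK q1 q2 0 0 (by
    intro s t
    have := h s t
    rw [h0, h3] at this
    linear_combination this)
  exact ⟨h0, this.1, this.2, h3⟩

lemma aeval_self {K : Type u} [Field K] {n : ℕ} (F : MvPolynomial (Fin n) K) (w : Fin n → K) :
    MvPolynomial.aeval w F = MvPolynomial.eval w F := by
  rw [← MvPolynomial.coe_aeval_eq_eval]; rfl

lemma coords {K : Type u} [Field K] (hK : 13 ≤ Cardinal.mk K) {n : ℕ}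
    (F : MvPolynomial (Fin n) K) (hF : F.IsHomogeneous 3) (e0 e1 f0 f1 : Fin n → K)
    (hE : ∀ s t : K, MvPolynomial.eval (s • e0 + t • e1) F = 0)
    (hG : ∀ s t : K, MvPolynomial.eval (s • f0 + t • f1) F = 0) :
    ∃ c : Cf K, ∀ (R : Type u) [CommRing R] [Algebra K R] (x0 x1 y0 y1 : R),
      MvPolynomial.aeval (fun i => x0 * algebraMap K R (e0 i) + x1 * algebraMap K R (e1 i)
        + y0 * algebraMap K R (f0 i) + y1 * algebraMap K R (f1 i)) F
        = (c.map (algebraMap K R)).f x0 x1 y0 y1 := by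
  obtain ⟨t, ht⟩ := expand F hF ![e0, e1, f0, f1]
  have ht' : ∀ (R : Type u) [CommRing R] [Algebra K R] (x0 x1 y0 y1 : R),
      MvPolynomial.aeval (fun i => x0 * algebraMap K R (e0 i) + x1 * algebraMap K R (e1 i)
        + y0 * algebraMap K R (f0 i) + y1 * algebraMap K R (f1 i)) F
      = ∑ p, ∑ q, ∑ r, algebraMap K R (t p q r) * ![x0, x1, y0, y1] p * ![x0, x1, y0, y1] q
        * ![x0, x1, y0, y1] r := by
    intro R _ _ x0 x1 y0 y1
    rw [← ht R ![x0, x1, y0, y1]]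
    congr 2
    funext i
    simp [Fin.sum_univ_four]
  simp only [Fin.sum_univ_four, Matrix.cons_val] at ht'
  have k1 := binary_zero hK (t 0 0 0) (t 0 0 1 + t 0 1 0 + t 1 0 0)
    (t 0 1 1 + t 1 0 1 + t 1 1 0) (t 1 1 1) (by
      intro s r
      have h1 := hE s r
      have h2 := ht' K s r 0 0
      have h3 : MvPolynomial.aeval (fun i => s * algebraMap K K (e0 i) + r * algebraMap K K (e1 i)
        + 0 * algebraMap K K (f0 i) + 0 * algebraMap K K (f1 i)) F = 0 := by
        refine Eq.trans ?_ h1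
        rw [aeval_self]
        congr 2
        funext i
        simp
      rw [h3] at h2
      simp only [Algebra.algebraMap_self, RingHom.id_apply] at h2
      linear_combination -h2)
  have k2 := binary_zero hK (t 2 2 2) (t 2 2 3 + t 2 3 2 + t 3 2 2)
    (t 2 3 3 + t 3 2 3 + t 3 3 2) (t 3 3 3) (by
      intro s r
      have h1 := hG s r
      have h2 := ht' K 0 0 s r
      have h3 : MvPolynomial.aeval (fun i => 0 * algebraMap K K (e0 i) + 0 * algebraMap K K (e1 i)
        + s * algebraMap K K (f0 i) + r * algebraMap K K (f1 i)) F = 0 := by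
        refine Eq.trans ?_ h1
        rw [aeval_self]
        congr 2
        funext i
        simp
      rw [h3] at h2
      simp only [Algebra.algebraMap_self, RingHom.id_apply] at h2
      linear_combination -h2)
  refine ⟨⟨t 0 0 2 + t 0 2 0 + t 2 0 0,
    t 0 1 2 + t 0 2 1 + t 1 0 2 + t 1 2 0 + t 2 0 1 + t 2 1 0,
    t 1 1 2 + t 1 2 1 + t 2 1 1,
    t 0 0 3 + t 0 3 0 + t 3 0 0,
    t 0 1 3 + t 0 3 1 + t 1 0 3 + t 1 3 0 + t 3 0 1 + t 3 1 0,
    t 1 1 3 + t 1 3 1 + t 3 1 1,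
    t 2 2 0 + t 2 0 2 + t 0 2 2,
    t 2 3 0 + t 2 0 3 + t 3 2 0 + t 3 0 2 + t 0 2 3 + t 0 3 2,
    t 3 3 0 + t 3 0 3 + t 0 3 3,
    t 2 2 1 + t 2 1 2 + t 1 2 2,
    t 2 3 1 + t 2 1 3 + t 3 2 1 + t 3 1 2 + t 1 2 3 + t 1 3 2,
    t 3 3 1 + t 3 1 3 + t 1 3 3⟩, ?_⟩
  intro R _ _ x0 x1 y0 y1
  rw [ht']
  obtain ⟨p0, p1, p2, p3⟩ := k1
  obtain ⟨r0, r1, r2, r3⟩ := k2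
  replace p0 := congrArg (algebraMap K R) p0
  replace p1 := congrArg (algebraMap K R) p1
  replace p2 := congrArg (algebraMap K R) p2
  replace p3 := congrArg (algebraMap K R) p3
  replace r0 := congrArg (algebraMap K R) r0
  replace r1 := congrArg (algebraMap K R) r1
  replace r2 := congrArg (algebraMap K R) r2
  replace r3 := congrArg (algebraMap K R) r3
  simp only [map_add, map_zero] at p0 p1 p2 p3 r0 r1 r2 r3
  simp only [Cf.f, Cf.A, Cf.B, Cf.qa0, Cf.qa1, Cf.qb0, Cf.qb1, Cf.map, map_add]
  linear_combination x0 ^ 3 * p0 + x0 ^ 2 * x1 * p1 + x0 * x1 ^ 2 * p2 + x1 ^ 3 * p3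
    + y0 ^ 3 * r0 + y0 ^ 2 * y1 * r1 + y0 * y1 ^ 2 * r2 + y1 ^ 3 * r3

end conc
end SkewCub


namespace SkewCub

open CubicSurf

section conc

universe u

/-- The form in the coordinates given by four vectors, over every algebra. -/
def IsCoords {K : Type u} [Field K] {n : ℕ} (F : MvPolynomial (Fin n) K)
    (e0 e1 f0 f1 : Fin n → K) (c : Cf K) : Prop :=
  ∀ (R : Type u) [CommRing R] [Algebra K R] (x0 x1 y0 y1 : R),
      MvPolynomial.aeval (fun i => x0 * algebraMap K R (e0 i) + x1 * algebraMap K R (e1 i)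
        + y0 * algebraMap K R (f0 i) + y1 * algebraMap K R (f1 i)) F
        = (c.map (algebraMap K R)).f x0 x1 y0 y1

lemma IsCoords.swap {K : Type u} [Field K] {n : ℕ} {F : MvPolynomial (Fin n) K}
    {e0 e1 f0 f1 : Fin n → K} {c : Cf K} (h : IsCoords F e0 e1 f0 f1 c) :
    IsCoords F f0 f1 e0 e1 c.swap := by
  intro R _ _ x0 x1 y0 y1
  have := h R y0 y1 x0 x1
  have e : (fun i => x0 * algebraMap K R (f0 i) + x1 * algebraMap K R (f1 i)
        + y0 * algebraMap K R (e0 i) + y1 * algebraMap K R (e1 i))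
      = (fun i => y0 * algebraMap K R (e0 i) + y1 * algebraMap K R (e1 i)
        + x0 * algebraMap K R (f0 i) + x1 * algebraMap K R (f1 i)) := by
    funext i; ring
  rw [e, this]
  simp only [Cf.f, Cf.A, Cf.B, Cf.qa0, Cf.qa1, Cf.qb0, Cf.qb1, Cf.map, Cf.swap]
  ring

lemma dual_eval {L : Type u} [Field L] {n : ℕ} (G : MvPolynomial (Fin n) L) (v w : Fin n → L) :
    MvPolynomial.aeval (fun i => (TrivSqZeroExt.inl (v i) + TrivSqZeroExt.inr (w i) :
      TrivSqZeroExt L L)) G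
      = TrivSqZeroExt.inl (MvPolynomial.eval v G)
        + TrivSqZeroExt.inr (∑ i, w i * MvPolynomial.eval v (MvPolynomial.pderiv i G)) := by
  classical
  induction G using MvPolynomial.induction_on with
  | C a => ext <;> simp [TrivSqZeroExt.algebraMap_eq_inl]
  | add p q hp hq =>
    rw [map_add, hp, hq]
    ext
    · simp
    · simp [mul_add, Finset.sum_add_distrib]
  | mul_X p j hp =>
    rw [map_mul, hp, MvPolynomial.aeval_X]
    ext
    · simp
    · simp only [TrivSqZeroExt.snd_mul, TrivSqZeroExt.fst_add, TrivSqZeroExt.snd_add,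
        TrivSqZeroExt.fst_inl, TrivSqZeroExt.fst_inr, TrivSqZeroExt.snd_inl,
        TrivSqZeroExt.snd_inr, add_zero, zero_add, Derivation.leibniz, MvPolynomial.pderiv_X,
        smul_eq_mul, map_add, map_mul, MvPolynomial.eval_X, mul_add, Finset.sum_add_distrib,
        MulOpposite.smul_eq_mul_unop, MulOpposite.unop_op]
      have hA : ∑ x, w x * (eval v p * eval v ((Pi.single j 1 : Fin n → MvPolynomial (Fin n) L) x))
          = w j * eval v p := by
        rw [Finset.sum_eq_single j]
        · simp
        · intro b _ hb; simp [hb]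
        · simp
      have hB : ∑ x, w x * (v j * eval v (pderiv x p))
          = v j * ∑ x, w x * eval v (pderiv x p) := by
        rw [Finset.mul_sum]
        exact Finset.sum_congr rfl fun i _ => by ring
      have hA' : ∑ x, w x * (eval v p * eval v ((Pi.single x 1 : Fin n → MvPolynomial (Fin n) L) j))
          = w j * eval v p := by
        rw [← hA]
        exact Finset.sum_congr rfl fun x _ => by simp [Pi.single_apply, eq_comm]
      simp only [hA, hA', hB, mul_zero, Finset.sum_const_zero, add_zero]
      ring

lemma dual_basis {K : Type u} [Field K] (e0 e1 f0 f1 : Fin 4 → K)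
    (hb : Bas (K := K) e0 e1 f0 f1) :
    ∃ Q : Matrix (Fin 4) (Fin 4) K, (Matrix.of ![e0, e1, f0, f1]) * Q = 1 := by
  choose p0 p1 q0 q1 h using fun i : Fin 4 => hb (Pi.single i 1)
  refine ⟨Matrix.of fun i => ![p0 i, p1 i, q0 i, q1 i], ?_⟩
  rw [mul_eq_one_comm]
  ext i j
  have := congrFun (h i) j
  simp only [Matrix.mul_apply, Fin.sum_univ_four, Matrix.of_apply, Matrix.cons_val]
  rw [Matrix.one_apply]
  simp only [Pi.single_apply, Pi.add_apply, Pi.smul_apply, smul_eq_mul] at this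
  rw [← this]
  simp only [eq_comm]

lemma smA_of_coords {K : Type u} [Field K] {F : MvPolynomial (Fin 4) K}
    (hS : IsSmoothHypersurf F) {e0 e1 f0 f1 : Fin 4 → K} (hb : Bas (K := K) e0 e1 f0 f1)
    {c : Cf K} (hc : IsCoords F e0 e1 f0 f1 c) : SmAc c := by
  classical
  intro X0 X1 h0 h1
  set φ := algebraMap K (AlgebraicClosure K) with hφ
  set v : Fin 4 → AlgebraicClosure K := fun i => X0 * φ (e0 i) + X1 * φ (e1 i) with hv
  have key : ∀ p0 p1 r0 r1 : K, ∀ w : Fin 4 → K, w = p0 • e0 + p1 • e1 + r0 • f0 + r1 • f1 →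
      eval v (MvPolynomial.map φ F) = 0 ∧
      ∑ i, φ (w i) * eval v (pderiv i (MvPolynomial.map φ F)) = 0 := by
    intro p0 p1 r0 r1 w hw
    have k1 := hc (TrivSqZeroExt (AlgebraicClosure K) (AlgebraicClosure K))
      (TrivSqZeroExt.inl X0 + TrivSqZeroExt.inr (φ p0))
      (TrivSqZeroExt.inl X1 + TrivSqZeroExt.inr (φ p1))
      (TrivSqZeroExt.inr (φ r0)) (TrivSqZeroExt.inr (φ r1))
    have k2 := dual_eval (MvPolynomial.map φ F) v (fun i => φ (w i))
    rw [hφ, MvPolynomial.aeval_map_algebraMap, ← hφ] at k2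
    have halg : ∀ k : K, algebraMap K
        (TrivSqZeroExt (AlgebraicClosure K) (AlgebraicClosure K)) k
        = TrivSqZeroExt.inl (φ k) := fun k => rfl
    have k3 : (fun i => (TrivSqZeroExt.inl (v i) + TrivSqZeroExt.inr (φ (w i)) :
        TrivSqZeroExt (AlgebraicClosure K) (AlgebraicClosure K)))
      = fun i => (TrivSqZeroExt.inl X0 + TrivSqZeroExt.inr (φ p0)) * algebraMap K _ (e0 i)
        + (TrivSqZeroExt.inl X1 + TrivSqZeroExt.inr (φ p1)) * algebraMap K _ (e1 i)
        + TrivSqZeroExt.inr (φ r0) * algebraMap K _ (f0 i)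
        + TrivSqZeroExt.inr (φ r1) * algebraMap K _ (f1 i) := by
      funext i
      simp only [halg]
      ext
      · simp [hv]
      · simp [hw]
    have k4 : (c.map (algebraMap K
        (TrivSqZeroExt (AlgebraicClosure K) (AlgebraicClosure K)))).f
      (TrivSqZeroExt.inl X0 + TrivSqZeroExt.inr (φ p0))
      (TrivSqZeroExt.inl X1 + TrivSqZeroExt.inr (φ p1))
      (TrivSqZeroExt.inr (φ r0)) (TrivSqZeroExt.inr (φ r1)) = 0 := by
      simp only [Cf.qa0, Cf.qa1, Cf.map] at h0 h1
      simp only [Cf.f, Cf.A, Cf.B, Cf.qa0, Cf.qa1, Cf.qb0, Cf.qb1, Cf.map, halg, pow_two]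
      ext
      · simp
      · simp
        linear_combination φ r0 * h0 + φ r1 * h1
    rw [k3, k1, k4] at k2
    have e1 := congrArg TrivSqZeroExt.fst k2
    have e2 := congrArg TrivSqZeroExt.snd k2
    simp only [TrivSqZeroExt.fst_add, TrivSqZeroExt.snd_add, TrivSqZeroExt.fst_inl,
      TrivSqZeroExt.fst_inr, TrivSqZeroExt.snd_inl, TrivSqZeroExt.snd_inr, add_zero, zero_add,
      TrivSqZeroExt.fst_zero, TrivSqZeroExt.snd_zero] at e1 e2
    exact ⟨e1.symm, e2.symm⟩
  have hv0 : v = 0 := by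
    apply hS v
    · obtain ⟨p0, p1, r0, r1, hw⟩ := hb 0
      exact (key p0 p1 r0 r1 0 hw).1
    · intro i
      obtain ⟨p0, p1, r0, r1, hw⟩ := hb (Pi.single i 1)
      have := (key p0 p1 r0 r1 _ hw).2
      simpa [Pi.single_apply] using this
  obtain ⟨Q, hQ⟩ := dual_basis e0 e1 f0 f1 hb
  have q00 := congrFun (congrFun hQ 0) 0
  have q01 := congrFun (congrFun hQ 0) 1
  have q10 := congrFun (congrFun hQ 1) 0
  have q11 := congrFun (congrFun hQ 1) 1
  simp [Matrix.mul_apply, Fin.sum_univ_four] at q00 q01 q10 q11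
  replace q00 := congrArg φ q00
  replace q01 := congrArg φ q01
  replace q10 := congrArg φ q10
  replace q11 := congrArg φ q11
  simp only [map_add, map_mul, map_one, map_zero] at q00 q01 q10 q11
  have v0 := congrFun hv0 0
  have v1 := congrFun hv0 1
  have v2 := congrFun hv0 2
  have v3 := congrFun hv0 3
  simp only [hv, Pi.zero_apply] at v0 v1 v2 v3
  constructor
  · linear_combination φ (Q 0 0) * v0 + φ (Q 1 0) * v1 + φ (Q 2 0) * v2 + φ (Q 3 0) * v3
      - X0 * q00 - X1 * q10
  · linear_combination φ (Q 0 1) * v0 + φ (Q 1 1) * v1 + φ (Q 2 1) * v2 + φ (Q 3 1) * v3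
      - X0 * q01 - X1 * q11

lemma IsCoords.form {K : Type u} [Field K] {n : ℕ} {F : MvPolynomial (Fin n) K}
    {e0 e1 f0 f1 : Fin n → K} {c : Cf K} (h : IsCoords F e0 e1 f0 f1 c) (x0 x1 y0 y1 : K) :
    eval (x0 • e0 + x1 • e1 + y0 • f0 + y1 • f1) F = c.f x0 x1 y0 y1 := by
  have := h K x0 x1 y0 y1
  rw [aeval_self] at this
  exact this

lemma pair_exists {K : Type u} [Field K] (hK : 13 ≤ Cardinal.mk K)
    {F : MvPolynomial (Fin 4) K} (hF : SmoothCubic F) (e0 e1 f0 f1 : Fin 4 → K)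
    (hb : Bas (K := K) e0 e1 f0 f1)
    (hE : ∀ s t : K, eval (s • e0 + t • e1) F = 0)
    (hG : ∀ s t : K, eval (s • f0 + t • f1) F = 0) :
    ∃ c : Cf K, IsCoords F e0 e1 f0 f1 c ∧ PC (fun v => eval v F) e0 e1 f0 f1 c := by
  obtain ⟨c, hc⟩ := coords hK F hF.1 e0 e1 f0 f1 hE hG
  have hc' : IsCoords F e0 e1 f0 f1 c := hc
  refine ⟨c, hc', hb, hc'.form, smA_of_coords hF.2 hb hc', ?_⟩
  refine smA_of_coords (c := c.swap) hF.2 ?_ hc'.swap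
  intro v
  obtain ⟨p0, p1, q0, q1, hv⟩ := hb v
  exact ⟨q0, q1, p0, p1, by rw [hv]; module⟩

end conc
end SkewCub


namespace SkewCub

open CubicSurf

section conc

universe u

lemma eval_lineRestrict {K : Type u} [Field K] {n : ℕ} (F : MvPolynomial (Fin n) K)
    (p r : Fin n → K) (s t : K) :
    eval ![s, t] (lineRestrict F p r) = eval (s • p + t • r) F := by
  rw [lineRestrict, ← aeval_self, ← AlgHom.comp_apply, MvPolynomial.comp_aeval, aeval_self]
  congr 2
  funext i
  simp [mul_comm]

lemma lineRestrict_eq {K : Type u} [Field K] (hK : 13 ≤ Cardinal.mk K) {n : ℕ}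
    (F : MvPolynomial (Fin n) K) (hF : F.IsHomogeneous 3) (p r : Fin n → K) (q1 q2 : K)
    (h : ∀ s t : K, eval (s • p + t • r) F = q1 * s ^ 2 * t + q2 * s * t ^ 2) :
    lineRestrict F p r = C q1 * X 0 ^ 2 * X 1 + C q2 * X 0 * X 1 ^ 2 := by
  obtain ⟨c0, c1, c2, c3, hc⟩ := binary F hF p r
  have k := binary_zero hK c0 (c1 - q1) (c2 - q2) c3 (by
    intro s t
    have h1 := hc K s t
    have h2 := h s t
    have h3 : MvPolynomial.aeval (fun i => s * algebraMap K K (p i) + t * algebraMap K K (r i)) F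
        = eval (s • p + t • r) F := by
      rw [aeval_self]; rfl
    rw [h3, h2] at h1
    simp only [Algebra.algebraMap_self, RingHom.id_apply] at h1
    linear_combination -h1)
  have h1 := hc (MvPolynomial (Fin 2) K) (X 0) (X 1)
  have h2 : lineRestrict F p r = MvPolynomial.aeval (fun i => (X 0 : MvPolynomial (Fin 2) K)
      * algebraMap K _ (p i) + X 1 * algebraMap K _ (r i)) F := by
    rw [lineRestrict]
    congr 2
    funext i
    simp only [MvPolynomial.algebraMap_eq]; ring
  rw [h2, h1, k.1, k.2.2.2, sub_eq_zero.mp k.2.1, sub_eq_zero.mp k.2.2.1]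
  simp only [MvPolynomial.algebraMap_eq, map_zero]
  ring

/-- The vector `v` represents a point of the span of `P`. -/
def Mem {K : Type u} [Field K] {n : ℕ} (F : MvPolynomial (Fin n) K)
    (P : Projectivization K (Fin n → K)) (v : Fin n → K) : Prop :=
  ∃ hv : v ≠ 0, SpanMem F {P} (Projectivization.mk K v hv)

lemma mem_rule {K : Type u} [Field K] (hK : 13 ≤ Cardinal.mk K) {n : ℕ}
    {F : MvPolynomial (Fin n) K} (hF : F.IsHomogeneous 3) (P : Projectivization K (Fin n → K))
    (p r : Fin n → K) (α β k : K) (hk : k ≠ 0) (hαβ : α ≠ 0 ∨ β ≠ 0)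
    (hN : ∀ s t : K, eval (s • p + t • r) F = k * s * t * (β * s - α * t))
    (hp : Mem F P p) (hq : Mem F P (α • p + β • r)) : Mem F P r := by
  obtain ⟨hp0, hp⟩ := hp
  obtain ⟨hq0, hq⟩ := hq
  have hno : ¬ ∀ s t : K, eval (s • p + t • r) F = 0 := by
    intro h
    have := coeff_unique hK (k * β) (-(k * α)) 0 0 (by
      intro s t
      have h1 := hN s t
      rw [h s t] at h1
      linear_combination -h1)
    rcases hαβ with h1 | h1
    · exact mul_ne_zero hk h1 (neg_eq_zero.mp this.2)
    · exact mul_ne_zero hk h1 this.1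
  have hNp : eval p F = 0 := by simpa using hN 1 0
  have hNr : eval r F = 0 := by simpa using hN 0 1
  have hind : LinearIndependent K ![p, r] := by
    rw [LinearIndependent.pair_iff]
    intro a b hab
    have hb : b = 0 := by
      by_contra hb
      apply hno
      intro s t
      have hr : r = (-(b⁻¹ * a)) • p := by
        have : b⁻¹ • (a • p + b • r) = 0 := by rw [hab, smul_zero]
        rw [smul_add, smul_smul, smul_smul, inv_mul_cancel₀ hb, one_smul] at this
        rw [neg_smul]
        exact eq_neg_of_add_eq_zero_right this
      have : s • p + t • r = (s + t * (-(b⁻¹ * a))) • p := by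
        conv_lhs => rw [hr]
        module
      rw [this, eval_smul_of_isHomogeneous hF, hNp, mul_zero]
    refine ⟨?_, hb⟩
    rw [hb, zero_smul, add_zero] at hab
    exact (smul_eq_zero.mp hab).resolve_right hp0
  have hr0 : r ≠ 0 := by
    have := hind.ne_zero 1
    simpa using this
  refine ⟨hr0, ?_⟩
  have hpW : p ∈ Submodule.span K (Set.range ![p, r]) := Submodule.subset_span ⟨0, rfl⟩
  have hrW : r ∈ Submodule.span K (Set.range ![p, r]) := Submodule.subset_span ⟨1, rfl⟩
  refine SpanMem.secant (Projectivization.mk K p hp0) (Projectivization.mk K _ hq0) _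
    (Submodule.span K (Set.range ![p, r])) ?_ ?_ hp hq (mk_mem_zeroSet hF hr0 hNr) ?_
  · rw [IsLine, finrank_span_eq_card hind]; simp
  · intro hW
    apply hno
    intro s t
    rw [← eval_lineRestrict, hW p r hpW hrW, map_zero]
  · refine ⟨p, r, hpW, hrW, hind, -k, ![1, α, 0], ![0, β, 1], ?_, neg_ne_zero.mpr hk, ?_, ?_, ?_,
      ?_⟩
    · intro j
      fin_cases j
      · simpa using hp0
      · simpa using hq0
      · simpa using hr0
    · rw [lineRestrict_eq hK F hF p r (k * β) (-(k * α)) (by intro s t; rw [hN]; ring)]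
      simp only [Fin.prod_univ_three, Matrix.cons_val, map_mul, map_neg, map_zero, map_one]
      ring
    · rw [Projectivization.mk_eq_mk_iff']
      exact ⟨1, by simp⟩
    · rw [Projectivization.mk_eq_mk_iff']
      exact ⟨1, by simp⟩
    · rw [Projectivization.mk_eq_mk_iff']
      exact ⟨1, by simp⟩

lemma geo {K : Type u} [Field K] (hK : 13 ≤ Cardinal.mk K) {F : MvPolynomial (Fin 4) K}
    (hF : SmoothCubic F) (P : Projectivization K (Fin 4 → K)) :
    Geo (fun v => eval v F) (Mem F P) where
  card := hK
  rule := mem_rule hK hF.1 P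
  smul := by
    rintro k v hk ⟨hv, h⟩
    refine ⟨smul_ne_zero hk hv, ?_⟩
    have : Projectivization.mk K (k • v) (smul_ne_zero hk hv) = Projectivization.mk K v hv := by
      rw [Projectivization.mk_eq_mk_iff']
      exact ⟨k, rfl⟩
    rw [this]; exact h
  pair := by
    intro e0 e1 f0 f1 hb hE hG
    obtain ⟨c, -, h⟩ := pair_exists hK hF e0 e1 f0 f1 hb hE hG
    exact ⟨c, h⟩

lemma indep4 {K : Type u} [Field K] {e0 e1 f0 f1 : Fin 4 → K}
    (hb : Bas (K := K) e0 e1 f0 f1) {L : Type u} [Field L] (φ : K →+* L) (z0 z1 z2 z3 : L)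
    (h : z0 • clVec φ e0 + z1 • clVec φ e1 + z2 • clVec φ f0 + z3 • clVec φ f1 = 0) :
    z0 = 0 ∧ z1 = 0 ∧ z2 = 0 ∧ z3 = 0 := by
  obtain ⟨Q, hQ⟩ := dual_basis e0 e1 f0 f1 hb
  have h1 : (Matrix.of ![e0, e1, f0, f1]).map φ * Q.map φ = 1 := by
    rw [← Matrix.map_mul, hQ, Matrix.map_one _ (map_zero φ) (map_one φ)]
  have h2 : Matrix.vecMul ![z0, z1, z2, z3] ((Matrix.of ![e0, e1, f0, f1]).map φ) = 0 := by
    rw [← h]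
    funext i
    simp [Matrix.vecMul, dotProduct, Fin.sum_univ_four, clVec]
  have h3 : ![z0, z1, z2, z3] = 0 := by
    rw [← Matrix.vecMul_one ![z0, z1, z2, z3], ← h1, ← Matrix.vecMul_vecMul, h2,
      Matrix.zero_vecMul]
  exact ⟨congrFun h3 0, congrFun h3 1, congrFun h3 2, congrFun h3 3⟩

lemma line_gen {K : Type u} [Field K] (hK : 13 ≤ Cardinal.mk K) {n : ℕ}
    {F : MvPolynomial (Fin n) K} (hF : F.IsHomogeneous 3) (p r : Fin n → K)
    (h : ∀ s t : K, eval (s • p + t • r) F = 0) (L : Type u) [Field L] [Algebra K L] :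
    LineOnSurf (MvPolynomial.map (algebraMap K L) F) (Submodule.span L
      {clVec (algebraMap K L) p, clVec (algebraMap K L) r}) := by
  obtain ⟨c0, c1, c2, c3, hc⟩ := binary F hF p r
  have k := binary_zero hK c0 c1 c2 c3 (by
    intro s t
    have h1 := hc K s t
    have h3 : MvPolynomial.aeval (fun i => s * algebraMap K K (p i) + t * algebraMap K K (r i)) F
        = eval (s • p + t • r) F := by
      rw [aeval_self]; rfl
    rw [h3, h s t] at h1
    simp only [Algebra.algebraMap_self, RingHom.id_apply] at h1
    exact h1.symm)
  intro x y hx hy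
  obtain ⟨a, b, rfl⟩ := Submodule.mem_span_pair.mp hx
  obtain ⟨a', b', rfl⟩ := Submodule.mem_span_pair.mp hy
  rw [lineRestrict, MvPolynomial.aeval_map_algebraMap]
  have h1 := hc (MvPolynomial (Fin 2) L) (C a * X 0 + C a' * X 1)
    (C b * X 0 + C b' * X 1)
  rw [k.1, k.2.1, k.2.2.1, k.2.2.2] at h1
  simp only [map_zero, zero_mul, add_zero] at h1
  have heq : (fun i => C ((a • clVec (algebraMap K L) p + b • clVec (algebraMap K L) r) i) * X 0
      + C ((a' • clVec (algebraMap K L) p + b' • clVec (algebraMap K L) r) i) * X 1)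
      = (fun i => (C a * X 0 + C a' * X 1) * algebraMap K (MvPolynomial (Fin 2) L) (p i)
        + (C b * X 0 + C b' * X 1) * algebraMap K (MvPolynomial (Fin 2) L) (r i)) := by
    funext i
    simp only [clVec, Pi.add_apply, Pi.smul_apply, smul_eq_mul, map_add, map_mul,
      MvPolynomial.algebraMap_apply]
    ring
  rw [heq]
  exact h1

lemma line_cl {K : Type u} [Field K] (hK : 13 ≤ Cardinal.mk K) {n : ℕ}
    {F : MvPolynomial (Fin n) K} (hF : F.IsHomogeneous 3) (p r : Fin n → K)
    (h : ∀ s t : K, eval (s • p + t • r) F = 0) :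
    LineOnSurf (clF F) (Submodule.span (AlgebraicClosure K)
      {clVec (algebraMap K (AlgebraicClosure K)) p,
        clVec (algebraMap K (AlgebraicClosure K)) r}) :=
  line_gen hK hF p r h (AlgebraicClosure K)

lemma eckardt {K : Type u} [Field K] (hK : 13 ≤ Cardinal.mk K) {F : MvPolynomial (Fin 4) K}
    (hF : F.IsHomogeneous 3) (P : Projectivization K (Fin 4 → K)) {e1 f0 f1 : Fin 4 → K}
    {c : Cf K} (h : PC (fun v => eval v F) P.rep e1 f0 f1 c) (ha : c.a0 = 0) (hb : c.b0 = 0)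
    (ha1 : c.a1 = 0) : IsEckardt F P := by
  have hb3 := h.b3_ne hb
  have ha2 : c.a2 ≠ 0 := fun h0 => h.a12_ne ha ⟨ha1, h0⟩
  set φ := algebraMap K (AlgebraicClosure K) with hφ
  have hφb : φ c.b3 ≠ 0 := by simpa using hb3
  have hφa : φ c.a2 ≠ 0 := by simpa using ha2
  have hind := fun z0 z1 z2 => indep4 h.bas φ z0 z1 z2 0
  have hline : ∀ w1 w2 : K, (w1 ≠ 0 ∨ w2 ≠ 0) →
      (∀ s t : K, eval (s • P.rep + t • (w1 • e1 + w2 • f0)) F = 0) →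
      IsLine (Submodule.span (AlgebraicClosure K)
        {clVec φ P.rep, clVec φ (w1 • e1 + w2 • f0)}) ∧
      LineOnSurf (clF F) (Submodule.span (AlgebraicClosure K)
        {clVec φ P.rep, clVec φ (w1 • e1 + w2 • f0)}) ∧
      OnLine (Submodule.span (AlgebraicClosure K)
        {clVec φ P.rep, clVec φ (w1 • e1 + w2 • f0)}) (clPt φ P) := by
    intro w1 w2 hw hN
    refine ⟨?_, line_cl hK hF _ _ hN, ?_⟩
    · have hli : LinearIndependent (AlgebraicClosure K)
          ![clVec φ P.rep, clVec φ (w1 • e1 + w2 • f0)] := by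
        rw [LinearIndependent.pair_iff]
        intro s t hst
        have := hind s (t * φ w1) (t * φ w2) (by
          rw [← hst]
          funext i
          simp [clVec]
          ring)
        refine ⟨this.1, ?_⟩
        rcases hw with hw | hw
        · exact (mul_eq_zero.mp this.2.1).resolve_right (by simpa using hw)
        · exact (mul_eq_zero.mp this.2.2.1).resolve_right (by simpa using hw)
      rw [IsLine]
      have := finrank_span_eq_card hli
      rw [Matrix.range_cons, Matrix.range_cons, Matrix.range_empty, Set.union_empty,
        Set.singleton_union] at this
      rw [this]; simp
    · obtain ⟨a, ha⟩ := Projectivization.exists_smul_eq_mk_rep (AlgebraicClosure K)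
        (clVec φ P.rep) (clVec_ne_zero φ P.rep_nonzero)
      rw [OnLine, clPt, ← ha]
      exact Submodule.smul_mem _ _ (Submodule.subset_span (by simp))
  have hne : ∀ w1 w2 v1 v2 : K, w1 * v2 - w2 * v1 ≠ 0 →
      Submodule.span (AlgebraicClosure K) {clVec φ P.rep, clVec φ (w1 • e1 + w2 • f0)} ≠
      Submodule.span (AlgebraicClosure K) {clVec φ P.rep, clVec φ (v1 • e1 + v2 • f0)} := by
    intro w1 w2 v1 v2 hd heq
    have hm : clVec φ (w1 • e1 + w2 • f0) ∈ Submodule.span (AlgebraicClosure K)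
        {clVec φ P.rep, clVec φ (v1 • e1 + v2 • f0)} := by
      rw [← heq]; exact Submodule.subset_span (by simp)
    obtain ⟨a, b, hab⟩ := Submodule.mem_span_pair.mp hm
    have := hind a (b * φ v1 - φ w1) (b * φ v2 - φ w2) (by
      have h0 := sub_eq_zero.mpr hab
      rw [← h0]
      funext i
      simp [clVec]
      ring)
    have hz : φ (w1 * v2 - w2 * v1) = 0 := by
      simp only [map_sub, map_mul]
      linear_combination φ v1 * this.2.2.1 - φ v2 * this.2.1
    exact hd ((map_eq_zero φ).mp hz)
  have hplane : ∀ w1 w2 : K, w1 * w2 * (c.a2 * w1 + c.b3 * w2) = 0 →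
      ∀ s t : K, eval (s • P.rep + t • (w1 • e1 + w2 • f0)) F = 0 := by
    intro w1 w2 hw s t
    have h1 := h.plane ha hb s (t * w1) (t * w2)
    have h2 : s • P.rep + t • (w1 • e1 + w2 • f0)
      = s • P.rep + (t * w1) • e1 + (t * w2) • f0 := by module
    rw [h2, h1, ha1]
    linear_combination t ^ 3 * hw
  refine ⟨_, _, _, hne 1 0 0 1 (by simp), hne 1 0 c.b3 (-c.a2) (by simpa using ha2),
    hne 0 1 c.b3 (-c.a2) (by simpa using hb3), ?_⟩
  intro W hW
  simp only [Set.mem_insert_iff, Set.mem_singleton_iff] at hW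
  rcases hW with rfl | rfl | rfl
  · exact hline 1 0 (Or.inl one_ne_zero) (hplane _ _ (by ring))
  · exact hline 0 1 (Or.inr one_ne_zero) (hplane _ _ (by ring))
  · exact hline c.b3 (-c.a2) (Or.inl hb3) (hplane _ _ (by ring))

lemma main_aux {K : Type u} [Field K] (hK : 13 ≤ Cardinal.mk K)
    (F : MvPolynomial (Fin 4) K) (hF : SmoothCubic F)
    (W₁ W₂ : Submodule K (Fin 4 → K))
    (hl₁ : IsLine W₁) (hl₂ : IsLine W₂)
    (hS₁ : LineOnSurf F W₁) (hS₂ : LineOnSurf F W₂)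
    (hskew : W₁ ⊓ W₂ = ⊥)
    (P : Projectivization K (Fin 4 → K))
    (hP : OnLine W₁ P)
    (hPS : P ∈ zeroSet F)
    (hPE : ¬ IsEckardt F P) :
    Span F {P} = zeroSet F := by
  have g := geo hK hF P
  let b := Module.finBasisOfFinrankEq K W₁ hl₁
  let d := Module.finBasisOfFinrankEq K W₂ hl₂
  have hbs : ∀ w ∈ W₁, ∃ s t : K, w = s • (b 0 : Fin 4 → K) + t • (b 1 : Fin 4 → K) := by
    intro w hw
    have := b.sum_repr ⟨w, hw⟩
    rw [Fin.sum_univ_two] at this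
    exact ⟨_, _, (congrArg Subtype.val this).symm⟩
  have hds : ∀ w ∈ W₂, ∃ s t : K, w = s • (d 0 : Fin 4 → K) + t • (d 1 : Fin 4 → K) := by
    intro w hw
    have := d.sum_repr ⟨w, hw⟩
    rw [Fin.sum_univ_two] at this
    exact ⟨_, _, (congrArg Subtype.val this).symm⟩
  have htop : W₁ ⊔ W₂ = ⊤ := by
    apply Submodule.eq_top_of_finrank_eq
    have h1 := Submodule.finrank_sup_add_finrank_inf_eq W₁ W₂
    rw [hskew, finrank_bot, hl₁, hl₂] at h1
    rw [Module.finrank_fin_fun]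
    omega
  have hbas : Bas (K := K) (b 0 : Fin 4 → K) (b 1 : Fin 4 → K) (d 0 : Fin 4 → K)
      (d 1 : Fin 4 → K) := by
    intro v
    have hv : v ∈ W₁ ⊔ W₂ := by rw [htop]; trivial
    obtain ⟨w1, hw1, w2, hw2, rfl⟩ := Submodule.mem_sup.mp hv
    obtain ⟨s, t, rfl⟩ := hbs w1 hw1
    obtain ⟨s', t', rfl⟩ := hds w2 hw2
    exact ⟨s, t, s', t', by module⟩
  have hv1 : ∀ s t : K, eval (s • (b 0 : Fin 4 → K) + t • (b 1 : Fin 4 → K)) F = 0 := by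
    intro s t
    rw [← eval_lineRestrict, hS₁ _ _ (b 0).2 (b 1).2, map_zero]
  have hv2 : ∀ s t : K, eval (s • (d 0 : Fin 4 → K) + t • (d 1 : Fin 4 → K)) F = 0 := by
    intro s t
    rw [← eval_lineRestrict, hS₂ _ _ (d 0).2 (d 1).2, map_zero]
  obtain ⟨c, h⟩ := g.pair _ _ _ _ hbas hv1 hv2
  obtain ⟨x0, x1, hx⟩ := hbs P.rep hP
  have hx0 : x0 ≠ 0 ∨ x1 ≠ 0 := by
    by_contra h0
    push Not at h0
    apply P.rep_nonzero
    rw [hx, h0.1, h0.2]; simp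
  obtain ⟨u0, u1, hu⟩ := exists_compl hx0
  obtain ⟨c1, h1⟩ := h.rebase g _ _ _ _ hu
  rw [← hx] at h1
  have hy : c1.a3 ≠ 0 ∨ -c1.a0 ≠ 0 := by
    by_contra h0
    push Not at h0
    have := h1.smA.smA 1 0 (by simpa [Cf.qa0] using h0.2) (by simpa [Cf.qa1] using h0.1)
    exact one_ne_zero this.1
  obtain ⟨w0, w1, hw⟩ := exists_compl hy
  obtain ⟨c2, h2⟩ := h1.rebaseF g _ _ _ _ hw
  have k := h2.coeff00 g 0 (c1.B 1 0 c1.a3 (-c1.a0)) (by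
    intro s t
    have := h1.form s 0 (t * c1.a3) (t * (-c1.a0))
    refine Eq.trans ?_ (this.trans ?_)
    · exact congrArg (fun v => eval v F) (by module)
    · simp only [Cf.f, Cf.A, Cf.B, Cf.qa0, Cf.qa1, Cf.qb0, Cf.qb1]; ring)
  have hMP : Mem F P P.rep := by
    refine ⟨P.rep_nonzero, SpanMem.base _ ?_⟩
    rw [Projectivization.mk_rep]; rfl
  have hne : ¬ (c2.b0 = 0 ∧ c2.a1 = 0) := fun h0 =>
    hPE (eckardt hK hF.1 P h2 k.1 h0.1 h0.2)
  ext Q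
  constructor
  · intro hQ
    have hQ' : SpanMem F {P} Q := hQ
    cases hQ' with
    | base _ h => rw [Set.mem_singleton_iff.mp h]; exact hPS
    | secant _ _ _ _ _ _ _ _ hR _ => exact hR
  · intro hQ
    obtain ⟨hq, hm⟩ := abstract_main g h2 k.1 hne hMP Q.rep Q.rep_nonzero hQ
    rw [Projectivization.mk_rep] at hm
    exact hm

end conc
end SkewCub

open CubicSurf MvPolynomial in
/-- Let `K` be a field with at least 13 elements and `S` a smooth cubic
surface in `ℙ³` over `K` containing a pair of skew `K`-lines. If `P` is a `K`-point on
either of the two lines which is not an Eckardt point, then `Span({P}) = S(K)`. -/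
theorem cubic_surface_skew_lines_span_singleton
    {K : Type*} [Field K] (hK : 13 ≤ Cardinal.mk K)
    (F : MvPolynomial (Fin 4) K) (hF : SmoothCubic F)
    (W₁ W₂ : Submodule K (Fin 4 → K))
    (hl₁ : IsLine W₁) (hl₂ : IsLine W₂)
    (hS₁ : LineOnSurf F W₁) (hS₂ : LineOnSurf F W₂)
    (hskew : W₁ ⊓ W₂ = ⊥)
    (P : Projectivization K (Fin 4 → K))
    (hP : OnLine W₁ P ∨ OnLine W₂ P)
    (hPS : P ∈ zeroSet F)
    (hPE : ¬ IsEckardt F P) :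
    Span F {P} = zeroSet F := by
  rcases hP with hP | hP
  · exact SkewCub.main_aux hK F hF W₁ W₂ hl₁ hl₂ hS₁ hS₂ hskew P hP hPS hPE
  · exact SkewCub.main_aux hK F hF W₂ W₁ hl₂ hl₁ hS₂ hS₁ (by rwa [inf_comm]) P hP hPS hPE
end
end

section
/- Let p ≡ 1 (mod 3) be a prime such that 2 is a cube modulo p, and let C_p be the smooth plane cubic curve x^3 + y^3 + z^3 = 0 over F_p. Then dim_{F_2} Pic^0(C_p)/2Pic^0(C_p) = 2, and each of the 4 elements of Pic^0(C_p)/2Pic^0(C_p) is represented by the class of P − O for some P ∈ C_p(F_p), where O = (1:−1:0). Equivalently, the elliptic curve E: y^2 + y = x^3 − 7 over F_p (a Weierstrass model of (C_p, O)) has full 2-torsion over F_p, i.e. E(F_p)[2] ≅ Z/2Z × Z/2Z. -/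
/- Common framework: points, lines, intersection divisors, the secant-tangent span,
the groups `H_S(K)`, geometric notions over the algebraic closure, and topologies. -/

open MvPolynomial

noncomputable section

namespace CubicSurf

open MvPolynomial

variable (p : ℕ) [Fact p.Prime]

/-- The plane cubic curve `C_p : x³ + y³ + z³ = 0` over `F_p`. -/
def Gcubic : MvPolynomial (Fin 3) (ZMod p) := X 0 ^ 3 + X 1 ^ 3 + X 2 ^ 3

lemma Gcubic_hom : (Gcubic p).IsHomogeneous 3 := by
  have h : ∀ i : Fin 3, ((X i : MvPolynomial (Fin 3) (ZMod p)) ^ 3).IsHomogeneous 3 :=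
    fun i => by simpa using (isHomogeneous_X _ i).pow 3
  exact ((h 0).add (h 1)).add (h 2)

lemma O_ne_zero : (![1, -1, 0] : Fin 3 → ZMod p) ≠ 0 := by
  intro h
  have h0 := congrFun h 0
  simp at h0

lemma O_eval : eval (![1, -1, 0] : Fin 3 → ZMod p) (Gcubic p) = 0 := by
  simp [Gcubic]
  ring

/-- The flex `O = (1 : -1 : 0)` on `C_p`. -/
def OPt : zeroSet (Gcubic p) :=
  ⟨Projectivization.mk (ZMod p) ![1, -1, 0] (O_ne_zero p),
    mk_mem_zeroSet (Gcubic_hom p) (O_ne_zero p) (O_eval p)⟩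

/-- Note: for the plane cubic `C_p` with the rational point `O`, the group
`H_{C_p}(F_p)` built from collinearity relations computes `Pic(C_p)`, and its degree-0
part `H⁰` computes `Pic⁰(C_p)`. -/
abbrev PicC := HS (Gcubic p)

/-- `Pic⁰(C_p)`. -/
abbrev Pic0C : AddSubgroup (PicC p) := H0 (Gcubic p)

end CubicSurf

namespace CubicSurf

variable (p : ℕ) [Fact p.Prime]

/-! ### The Weierstrass model -/

/-- The Weierstrass model of `(C_p, O)`. -/
abbrev EW : WeierstrassCurve.Affine (ZMod p) :=
  (WeierstrassCurve.toAffine ⟨0, 0, 1, 0, -7⟩ : WeierstrassCurve.Affine (ZMod p))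

lemma EW_nonsing (h3 : (3 : ZMod p) ≠ 0) (x y : ZMod p) :
    (EW p).Nonsingular x y ↔ y ^ 2 + y = x ^ 3 - 7 := by
  rw [← WeierstrassCurve.Affine.equation_iff_nonsingular_of_Δ_ne_zero,
    WeierstrassCurve.Affine.equation_iff]
  · simp [sub_eq_add_neg]
  · have : (EW p).Δ = - 3 ^ 9 := by
      simp only [WeierstrassCurve.Δ, WeierstrassCurve.b₂, WeierstrassCurve.b₄,
        WeierstrassCurve.b₆, WeierstrassCurve.b₈]
      ring
    rw [this]
    exact neg_ne_zero.mpr (pow_ne_zero _ h3)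

/-- The point of the Weierstrass model with the given homogeneous coordinates. -/
def toPt (x y z : ZMod p) : (EW p).Point :=
  open Classical in
  if h : z ≠ 0 ∧ (EW p).Nonsingular (x / z) (y / z) then .some _ _ h.2 else 0

lemma toPt_zero (x y : ZMod p) : toPt p x y 0 = 0 := by simp [toPt]

lemma toPt_some {x y z : ZMod p} (hz : z ≠ 0) (h : (EW p).Nonsingular (x / z) (y / z)) :
    toPt p x y z = .some _ _ h := by
  rw [toPt, dif_pos ⟨hz, h⟩]

lemma toPt_smul {a : ZMod p} (ha : a ≠ 0) (x y z : ZMod p) :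
    toPt p (a * x) (a * y) (a * z) = toPt p x y z := by
  by_cases hz : z = 0
  · simp [hz, toPt_zero]
  by_cases h : (EW p).Nonsingular (x / z) (y / z)
  · have h' : (EW p).Nonsingular (a * x / (a * z)) (a * y / (a * z)) := by
      rwa [mul_div_mul_left _ _ ha, mul_div_mul_left _ _ ha]
    rw [toPt_some p hz h, toPt_some p (mul_ne_zero ha hz) h']
    congr 1 <;> rw [mul_div_mul_left _ _ ha]
  · have h' : ¬ (EW p).Nonsingular (a * x / (a * z)) (a * y / (a * z)) := by
      rwa [mul_div_mul_left _ _ ha, mul_div_mul_left _ _ ha]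
    rw [toPt, toPt, dif_neg (fun hh => h' hh.2), dif_neg (fun hh => h hh.2)]

lemma affine_line (h2 : (2 : ZMod p) ≠ 0) (h3 : (3 : ZMod p) ≠ 0)
    (x₁ x₂ x₃ y₁ y₂ y₃ l n : ZMod p)
    (H : ∀ x, x ^ 3 - 7 - (l * x + n) ^ 2 - (l * x + n) = (x - x₁) * (x - x₂) * (x - x₃))
    (e₁ : y₁ = l * x₁ + n) (e₂ : y₂ = l * x₂ + n) (e₃ : y₃ = l * x₃ + n)
    (g₁ : (EW p).Nonsingular x₁ y₁) (g₂ : (EW p).Nonsingular x₂ y₂)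
    (g₃ : (EW p).Nonsingular x₃ y₃) :
    (WeierstrassCurve.Affine.Point.some _ _ g₁ + WeierstrassCurve.Affine.Point.some _ _ g₂ +
      WeierstrassCurve.Affine.Point.some _ _ g₃ : (EW p).Point) = 0 := by
  have H0 := H 0
  have H1 := H 1
  have H2 := H (-1)
  have c2 : l ^ 2 = x₁ + x₂ + x₃ := by
    apply mul_left_cancel₀ h2
    linear_combination -H1 - H2 + 2 * H0
  have c1 : -(2 * l * n) - l = x₁ * x₂ + x₁ * x₃ + x₂ * x₃ := by
    apply mul_left_cancel₀ h2
    linear_combination H1 - H2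
  have E1 := (EW_nonsing p h3 _ _).1 g₁
  have key : ¬ (x₁ = x₂ ∧ y₁ = (EW p).negY x₂ y₂) ∧ (EW p).slope x₁ x₂ y₁ y₂ = l := by
    by_cases hx : x₁ = x₂
    · have hy : y₁ = y₂ := by rw [e₁, e₂, hx]
      subst hx
      subst hy
      have hd : 3 * x₁ ^ 2 = l * (2 * y₁ + 1) := by
        rw [e₁]
        linear_combination c1 - 2 * x₁ * c2
      have hne : y₁ ≠ (EW p).negY x₁ y₁ := by
        intro h
        have h' : 2 * y₁ + 1 = 0 := by
          simp [WeierstrassCurve.Affine.negY] at h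
          linear_combination h
        rw [h', mul_zero] at hd
        have hx0 : x₁ = 0 := by simpa [h3] using hd
        have : (3 : ZMod p) ^ 3 = 0 := by
          rw [hx0] at E1
          linear_combination 4 * E1 - (2 * y₁ + 1) * h'
        exact pow_ne_zero 3 h3 this
      refine ⟨fun h => hne h.2, ?_⟩
      rw [WeierstrassCurve.Affine.slope_of_Y_ne rfl hne]
      rw [div_eq_iff (sub_ne_zero.2 hne)]
      simp [WeierstrassCurve.Affine.negY]
      linear_combination hd
    · refine ⟨fun h => hx h.1, ?_⟩
      rw [WeierstrassCurve.Affine.slope_of_X_ne hx, div_eq_iff (sub_ne_zero.2 hx), e₁, e₂]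
      ring
  rw [WeierstrassCurve.Affine.Point.add_some key.1]
  apply WeierstrassCurve.Affine.Point.add_of_Y_eq
  · rw [key.2]
    simp [WeierstrassCurve.Affine.addX]
    linear_combination c2
  · rw [key.2]
    simp [WeierstrassCurve.Affine.addX, WeierstrassCurve.Affine.addY,
      WeierstrassCurve.Affine.negAddY, WeierstrassCurve.Affine.negY]
    rw [e₁, e₃]
    linear_combination (-l) * c2

/-- The homogeneous Weierstrass cubic. -/
def Wf (x y z : ZMod p) : ZMod p := y ^ 2 * z + y * z ^ 2 - x ^ 3 + 7 * z ^ 3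

lemma Wf_nonsing (h3 : (3 : ZMod p) ≠ 0) {x y z : ZMod p} (hz : z ≠ 0) (h : Wf p x y z = 0) :
    (EW p).Nonsingular (x / z) (y / z) := by
  rw [EW_nonsing p h3]
  unfold Wf at h
  field_simp
  linear_combination h

/-- Vertical line, with the point at infinity singled out. -/
lemma vert_aux (h2 : (2 : ZMod p) ≠ 0) (h3 : (3 : ZMod p) ≠ 0) (x₀ k Y₁ Z₁ Y₂ Z₂ d : ZMod p)
    (hd : d ≠ 0)
    (H : ∀ y, d * Wf p x₀ y 1 = k * ((y * Z₁ - Y₁) * (y * Z₂ - Y₂))) :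
    toPt p (x₀ * Z₁) Y₁ Z₁ + toPt p (x₀ * Z₂) Y₂ Z₂ = 0 := by
  have H0 := H 0
  have H1 := H 1
  have H2 := H (-1)
  unfold Wf at H0 H1 H2
  have c2 : d = k * (Z₁ * Z₂) := by
    apply mul_left_cancel₀ h2
    linear_combination H1 + H2 - 2 * H0
  have c1 : d = - k * (Z₁ * Y₂ + Z₂ * Y₁) := by
    apply mul_left_cancel₀ h2
    linear_combination H1 - H2
  have hne : k * (Z₁ * Z₂) ≠ 0 := c2 ▸ hd
  simp only [mul_ne_zero_iff] at hne
  obtain ⟨hk, hz1, hz2⟩ := hne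
  have e1 := H (Y₁ / Z₁)
  have e2 := H (Y₂ / Z₂)
  rw [div_mul_cancel₀ _ hz1, sub_self, zero_mul, mul_zero, mul_eq_zero, or_iff_right hd] at e1
  rw [div_mul_cancel₀ _ hz2, sub_self, mul_zero, mul_zero, mul_eq_zero, or_iff_right hd] at e2
  have n1 : (EW p).Nonsingular (x₀ * Z₁ / Z₁) (Y₁ / Z₁) := by
    have := Wf_nonsing p h3 one_ne_zero e1
    simpa [mul_div_cancel_right₀ _ hz1] using this
  have n2 : (EW p).Nonsingular (x₀ * Z₂ / Z₂) (Y₂ / Z₂) := by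
    have := Wf_nonsing p h3 one_ne_zero e2
    simpa [mul_div_cancel_right₀ _ hz2] using this
  rw [toPt_some p hz1 n1, toPt_some p hz2 n2]
  apply WeierstrassCurve.Affine.Point.add_of_Y_eq
  · rw [mul_div_cancel_right₀ _ hz1, mul_div_cancel_right₀ _ hz2]
  · simp [WeierstrassCurve.Affine.negY]
    field_simp
    apply mul_left_cancel₀ hk
    linear_combination c1 - c2

lemma line_sum (h2 : (2 : ZMod p) ≠ 0) (h3 : (3 : ZMod p) ≠ 0) (u v : Fin 3 → ZMod p)
    (hind : ¬ (u 0 * v 1 - u 1 * v 0 = 0 ∧ u 0 * v 2 - u 2 * v 0 = 0 ∧ u 1 * v 2 - u 2 * v 1 = 0))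
    (c : ZMod p) (l m : Fin 3 → ZMod p)
    (H : ∀ s t, Wf p (s * u 0 + t * v 0) (s * u 1 + t * v 1) (s * u 2 + t * v 2) =
      c * ((m 0 * s - l 0 * t) * (m 1 * s - l 1 * t) * (m 2 * s - l 2 * t)))
    (f : Fin 3 → (EW p).Point)
    (hf : ∀ k, f k = toPt p (l k * u 0 + m k * v 0) (l k * u 1 + m k * v 1)
      (l k * u 2 + m k * v 2)) :
    f 0 + f 1 + f 2 = 0 := by
  by_cases hz : u 2 = 0 ∧ v 2 = 0
  · have : ∀ k, f k = 0 := by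
      intro k
      rw [hf, hz.1, hz.2, mul_zero, mul_zero, add_zero, toPt_zero]
    simp [this]
  by_cases hD : u 0 * v 2 - u 2 * v 0 = 0
  · -- vertical line
    obtain ⟨x₀, hu, hv⟩ : ∃ x₀, u 0 = x₀ * u 2 ∧ v 0 = x₀ * v 2 := by
      by_cases hu2 : u 2 = 0
      · have hv2 : v 2 ≠ 0 := fun h => hz ⟨hu2, h⟩
        refine ⟨v 0 / v 2, ?_, ?_⟩
        · field_simp
          linear_combination hD
        · field_simp
      · refine ⟨u 0 / u 2, ?_, ?_⟩
        · field_simp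
        · field_simp
          linear_combination -hD
    have hD' : u 1 * v 2 - u 2 * v 1 ≠ 0 := by
      intro h
      apply hind
      refine ⟨?_, hD, h⟩
      rw [hu, hv]
      linear_combination (-x₀) * h
    set D := u 1 * v 2 - u 2 * v 1 with hDdef
    -- general identity
    have G : ∀ y z, D ^ 3 * Wf p (x₀ * z) y z = c *
        ((y * (l 0 * u 2 + m 0 * v 2) - z * (l 0 * u 1 + m 0 * v 1)) *
         (y * (l 1 * u 2 + m 1 * v 2) - z * (l 1 * u 1 + m 1 * v 1)) *
         (y * (l 2 * u 2 + m 2 * v 2) - z * (l 2 * u 1 + m 2 * v 1))) := by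
      intro y z
      have h := H (y * v 2 - z * v 1) (z * u 1 - y * u 2)
      rw [hu, hv] at h
      have ez : (y * v 2 - z * v 1) * u 2 + (z * u 1 - y * u 2) * v 2 = D * z := by
        rw [hDdef]; ring
      have ey : (y * v 2 - z * v 1) * u 1 + (z * u 1 - y * u 2) * v 1 = D * y := by
        rw [hDdef]; ring
      have ex : (y * v 2 - z * v 1) * (x₀ * u 2) + (z * u 1 - y * u 2) * (x₀ * v 2)
          = D * (x₀ * z) := by
        rw [hDdef]; ring
      rw [ez, ey, ex] at h
      have e : D ^ 3 * Wf p (x₀ * z) y z = Wf p (D * (x₀ * z)) (D * y) (D * z) := by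
        unfold Wf; ring
      rw [e, h]
      ring
    have hf' : ∀ k, f k = toPt p (x₀ * (l k * u 2 + m k * v 2)) (l k * u 1 + m k * v 1)
        (l k * u 2 + m k * v 2) := by
      intro k
      rw [hf, hu, hv]
      congr 1
      ring
    have hD3 : D ^ 3 ≠ 0 := pow_ne_zero 3 hD'
    have G0 := G 1 0
    have G1 : ∀ y, D ^ 3 * Wf p x₀ y 1 = c *
        ((y * (l 0 * u 2 + m 0 * v 2) - (l 0 * u 1 + m 0 * v 1)) *
         (y * (l 1 * u 2 + m 1 * v 2) - (l 1 * u 1 + m 1 * v 1)) *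
         (y * (l 2 * u 2 + m 2 * v 2) - (l 2 * u 1 + m 2 * v 1))) := by
      intro y
      simpa using G y 1
    have W0 : Wf p 0 1 0 = 0 := by simp [Wf]
    simp only [W0, mul_zero, one_mul, zero_mul, sub_zero] at G0
    have G0' := G0.symm
    simp only [mul_eq_zero] at G0'
    have hc : c ≠ 0 := by
      intro hc
      have H0 := G1 0
      have H1 := G1 1
      have H2 := G1 (-1)
      simp only [hc, zero_mul, mul_eq_zero, hD3, false_or, Wf] at H0 H1 H2
      exact h2 (by linear_combination H1 + H2 - 2 * H0)
    rcases G0' with h | (h | h) | h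
    · exact absurd h hc
    · have f0 : f 0 = 0 := by rw [hf', h, toPt_zero]
      rw [f0, zero_add, hf' 1, hf' 2]
      refine vert_aux p h2 h3 x₀ (-c * (l 0 * u 1 + m 0 * v 1)) _ _ _ _ (D ^ 3) hD3 fun y => ?_
      rw [G1, h]
      ring
    · have f0 : f 1 = 0 := by rw [hf', h, toPt_zero]
      rw [f0, add_zero, hf' 0, hf' 2]
      refine vert_aux p h2 h3 x₀ (-c * (l 1 * u 1 + m 1 * v 1)) _ _ _ _ (D ^ 3) hD3 fun y => ?_
      rw [G1, h]
      ring
    · have f0 : f 2 = 0 := by rw [hf', h, toPt_zero]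
      rw [f0, add_zero, hf' 0, hf' 1]
      refine vert_aux p h2 h3 x₀ (-c * (l 2 * u 1 + m 2 * v 1)) _ _ _ _ (D ^ 3) hD3 fun y => ?_
      rw [G1, h]
      ring
  · set D := u 0 * v 2 - u 2 * v 0 with hDdef
    have hD3 : D ^ 3 ≠ 0 := pow_ne_zero 3 hD
    obtain ⟨a, n, hu, hv⟩ : ∃ a n, u 1 = a * u 0 + n * u 2 ∧ v 1 = a * v 0 + n * v 2 := by
      refine ⟨(u 1 * v 2 - u 2 * v 1) / D, (u 0 * v 1 - u 1 * v 0) / D, ?_, ?_⟩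
      · field_simp
        rw [hDdef]; ring
      · field_simp
        rw [hDdef]; ring
    have G : ∀ x z, D ^ 3 * Wf p x (a * x + n * z) z = c *
        ((x * (l 0 * u 2 + m 0 * v 2) - z * (l 0 * u 0 + m 0 * v 0)) *
         (x * (l 1 * u 2 + m 1 * v 2) - z * (l 1 * u 0 + m 1 * v 0)) *
         (x * (l 2 * u 2 + m 2 * v 2) - z * (l 2 * u 0 + m 2 * v 0))) := by
      intro x z
      have h := H (x * v 2 - z * v 0) (z * u 0 - x * u 2)
      rw [hu, hv] at h
      have ez : (x * v 2 - z * v 0) * u 2 + (z * u 0 - x * u 2) * v 2 = D * z := by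
        rw [hDdef]; ring
      have ex : (x * v 2 - z * v 0) * u 0 + (z * u 0 - x * u 2) * v 0 = D * x := by
        rw [hDdef]; ring
      have ey : (x * v 2 - z * v 0) * (a * u 0 + n * u 2) +
          (z * u 0 - x * u 2) * (a * v 0 + n * v 2) = D * (a * x + n * z) := by
        rw [hDdef]; ring
      rw [ez, ey, ex] at h
      have e : D ^ 3 * Wf p x (a * x + n * z) z = Wf p (D * x) (D * (a * x + n * z)) (D * z) := by
        unfold Wf; ring
      rw [e, h]
      ring
    have hf' : ∀ k, f k = toPt p (l k * u 0 + m k * v 0)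
        (a * (l k * u 0 + m k * v 0) + n * (l k * u 2 + m k * v 2))
        (l k * u 2 + m k * v 2) := by
      intro k
      rw [hf, hu, hv]
      congr 1
      ring
    have hlead : c * ((l 0 * u 2 + m 0 * v 2) * (l 1 * u 2 + m 1 * v 2) *
        (l 2 * u 2 + m 2 * v 2)) = - D ^ 3 := by
      have := G 1 0
      simp [Wf] at this
      rw [this]
    have hne : c * ((l 0 * u 2 + m 0 * v 2) * (l 1 * u 2 + m 1 * v 2) *
        (l 2 * u 2 + m 2 * v 2)) ≠ 0 := by rw [hlead]; exact neg_ne_zero.2 hD3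
    rw [hf' 0, hf' 1, hf' 2]
    generalize l 0 * u 2 + m 0 * v 2 = Z₀ at *
    generalize l 1 * u 2 + m 1 * v 2 = Z₁ at *
    generalize l 2 * u 2 + m 2 * v 2 = Z₂ at *
    generalize l 0 * u 0 + m 0 * v 0 = X₀ at *
    generalize l 1 * u 0 + m 1 * v 0 = X₁ at *
    generalize l 2 * u 0 + m 2 * v 0 = X₂ at *
    simp only [mul_ne_zero_iff] at hne
    obtain ⟨hc, ⟨z0, z1⟩, z2⟩ := hne
    have w0 : Wf p X₀ (a * X₀ + n * Z₀) Z₀ = 0 := by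
      have := G X₀ Z₀
      rw [mul_comm Z₀ X₀, sub_self, zero_mul, zero_mul, mul_zero, mul_eq_zero] at this
      exact this.resolve_left hD3
    have w1 : Wf p X₁ (a * X₁ + n * Z₁) Z₁ = 0 := by
      have := G X₁ Z₁
      rw [mul_comm Z₁ X₁, sub_self, mul_zero, zero_mul, mul_zero, mul_eq_zero] at this
      exact this.resolve_left hD3
    have w2 : Wf p X₂ (a * X₂ + n * Z₂) Z₂ = 0 := by
      have := G X₂ Z₂
      rw [mul_comm Z₂ X₂, sub_self, mul_zero, mul_zero, mul_eq_zero] at this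
      exact this.resolve_left hD3
    rw [toPt_some p z0 (Wf_nonsing p h3 z0 w0), toPt_some p z1 (Wf_nonsing p h3 z1 w1),
      toPt_some p z2 (Wf_nonsing p h3 z2 w2)]
    refine affine_line p h2 h3 _ _ _ _ _ _ a n (fun x => ?_) ?_ ?_ ?_ _ _ _
    · have g := G x 1
      apply mul_left_cancel₀ hD3
      have e : x ^ 3 - 7 - (a * x + n) ^ 2 - (a * x + n) = - Wf p x (a * x + n * 1) 1 := by
        unfold Wf; ring
      rw [e, mul_neg, g]
      have e2 : D ^ 3 = - (c * (Z₀ * Z₁ * Z₂)) := by rw [hlead]; ring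
      rw [e2]
      field_simp
    · field_simp
    · field_simp
    · field_simp

end CubicSurf
namespace CubicSurf

variable (p : ℕ) [Fact p.Prime]

/-! ### From the cubic to the Weierstrass model -/

lemma eval_Gcubic (v : Fin 3 → ZMod p) : eval v (Gcubic p) = v 0 ^ 3 + v 1 ^ 3 + v 2 ^ 3 := by
  simp [Gcubic]

lemma eval_lineRestrict (u v : Fin 3 → ZMod p) (s t : ZMod p) :
    eval ![s, t] (lineRestrict (Gcubic p) u v) = eval (s • u + t • v) (Gcubic p) := by
  simp [Gcubic, lineRestrict, mul_comm]

/-- Image in the Weierstrass model of the point with coordinate vector `w`. -/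
def vecPt (w : Fin 3 → ZMod p) : (EW p).Point :=
  toPt p (-3 * w 2) (4 * w 0 - 5 * w 1) (w 0 + w 1)

lemma vecPt_smul {a : ZMod p} (ha : a ≠ 0) (w : Fin 3 → ZMod p) :
    vecPt p (a • w) = vecPt p w := by
  unfold vecPt
  rw [← toPt_smul p ha (-3 * w 2)]
  simp only [Pi.smul_apply, smul_eq_mul]
  congr 1 <;> ring

lemma vecPt_mk {w : Fin 3 → ZMod p} (hw : w ≠ 0) :
    vecPt p (Projectivization.mk (ZMod p) w hw).rep = vecPt p w := by
  obtain ⟨a, ha⟩ := Projectivization.exists_smul_eq_mk_rep (ZMod p) w hw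
  rw [← ha, Units.smul_def, vecPt_smul p a.ne_zero]

/-- The map on points. -/
def phi (P : zeroSet (Gcubic p)) : (EW p).Point := vecPt p P.1.rep

lemma minors {u v : Fin 3 → ZMod p} (h : LinearIndependent (ZMod p) ![u, v]) :
    ¬ (u 0 * v 1 - u 1 * v 0 = 0 ∧ u 0 * v 2 - u 2 * v 0 = 0 ∧ u 1 * v 2 - u 2 * v 1 = 0) := by
  rintro ⟨h1, h2, h3⟩
  rw [LinearIndependent.pair_iff] at h
  have key : ∀ i, v i = 0 ∧ u i = 0 := by
    intro i
    have := h (v i) (- u i) ?_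
    · exact ⟨this.1, neg_eq_zero.1 this.2⟩
    · funext j
      fin_cases i <;> fin_cases j <;> simp <;>
        first
        | ring1
        | linear_combination h1
        | linear_combination h2
        | linear_combination h3
        | linear_combination -h1
        | linear_combination -h2
        | linear_combination -h3
  have := h 1 0 (by funext j; simp [(key j).2])
  exact one_ne_zero this.1

lemma line_sum' (h2 : (2 : ZMod p) ≠ 0) (h3 : (3 : ZMod p) ≠ 0) (u v : Fin 3 → ZMod p)
    (hind : LinearIndependent (ZMod p) ![u, v])
    (c : ZMod p) (l m : Fin 3 → ZMod p)
    (H : lineRestrict (Gcubic p) u v = C c * ∏ k : Fin 3, (C (m k) * X 0 - C (l k) * X 1)) :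
    vecPt p (l 0 • u + m 0 • v) + vecPt p (l 1 • u + m 1 • v) + vecPt p (l 2 • u + m 2 • v)
      = 0 := by
  refine line_sum p h2 h3 ![-3 * u 2, 4 * u 0 - 5 * u 1, u 0 + u 1]
    ![-3 * v 2, 4 * v 0 - 5 * v 1, v 0 + v 1] ?_ (27 * c) l m ?_
    (fun k => vecPt p (l k • u + m k • v)) ?_
  · rintro ⟨e1, e2, e3⟩
    simp at e1 e2 e3
    apply minors p hind
    refine ⟨?_, ?_, ?_⟩
    · apply mul_left_cancel₀ (pow_ne_zero 2 h3)
      linear_combination e3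
    · apply mul_left_cancel₀ (pow_ne_zero 3 h3)
      linear_combination e1 + 5 * e2
    · apply mul_left_cancel₀ (pow_ne_zero 3 h3)
      linear_combination -e1 + 4 * e2
  · intro s t
    have h := congrArg (eval ![s, t]) H
    rw [eval_lineRestrict, eval_Gcubic] at h
    simp [Fin.prod_univ_three] at h
    simp [Wf]
    linear_combination 27 * h
  · intro k
    simp only [vecPt]
    simp
    congr 1 <;> ring

lemma triple_sum (h2 : (2 : ZMod p) ≠ 0) (h3 : (3 : ZMod p) ≠ 0) {P Q R : zeroSet (Gcubic p)}
    (h : TripleRel (Gcubic p) P Q R) : phi p P + phi p Q + phi p R = 0 := by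
  obtain ⟨W, hW, ⟨_, u, v, _, _, hi, c, l, m, hn, hc, hl, hP, hQ, hR⟩ | ⟨hl, hP, hQ, hR⟩⟩ := h
  · have := line_sum' p h2 h3 u v hi c l m hl
    rw [← vecPt_mk p (hn 0), ← vecPt_mk p (hn 1), ← vecPt_mk p (hn 2), hP, hQ, hR] at this
    exact this
  · let b := Module.finBasisOfFinrankEq (ZMod p) W hW
    have hi : LinearIndependent (ZMod p) ![(b 0 : Fin 3 → ZMod p), b 1] := by
      have := b.linearIndependent.map' W.subtype (Submodule.ker_subtype W)
      have e : ![(b 0 : Fin 3 → ZMod p), b 1] = W.subtype ∘ b := by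
        funext i
        fin_cases i <;> rfl
      rw [e]
      exact this
    have hr : ∀ w ∈ W, ∃ l m : ZMod p, w = l • (b 0 : Fin 3 → ZMod p) + m • b 1 := by
      intro w hw
      have := b.sum_repr ⟨w, hw⟩
      rw [Fin.sum_univ_two] at this
      exact ⟨_, _, (congrArg Subtype.val this).symm⟩
    obtain ⟨l0, m0, e0⟩ := hr _ hP
    obtain ⟨l1, m1, e1⟩ := hr _ hQ
    obtain ⟨l2, m2, e2⟩ := hr _ hR
    have := line_sum' p h2 h3 _ _ hi 0 ![l0, l1, l2] ![m0, m1, m2] (by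
      rw [hl _ _ (b 0).2 (b 1).2]; simp)
    simp only [Matrix.cons_val] at this
    rw [← e0, ← e1, ← e2] at this
    exact this

/-! ### Third intersection points -/

lemma lineRestrict_zero {u v : Fin 3 → ZMod p} (h : lineRestrict (Gcubic p) u v = 0) :
    LineOnSurf (Gcubic p) (Submodule.span (ZMod p) {u, v}) := by
  intro u' v' hu hv
  rw [Submodule.mem_span_pair] at hu hv
  obtain ⟨a, b, rfl⟩ := hu
  obtain ⟨c, d, rfl⟩ := hv
  have := congrArg (aeval ![C a * X 0 + C c * X 1, C b * X 0 + C d * X 1] :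
    MvPolynomial (Fin 2) (ZMod p) →ₐ[ZMod p] MvPolynomial (Fin 2) (ZMod p)) h
  rw [map_zero] at this
  rw [← this]
  simp [lineRestrict, Gcubic, MvPolynomial.algebraMap_eq]
  ring

lemma third_aux {u v : Fin 3 → ZMod p} (hi : LinearIndependent (ZMod p) ![u, v])
    (c l m α β : ZMod p) (hc : c ≠ 0)
    (H : lineRestrict (Gcubic p) u v =
      C c * ((C 0 * X 0 - C 1 * X 1) * (C m * X 0 - C l * X 1) * (C α * X 0 - C β * X 1)))
    (P Q : zeroSet (Gcubic p)) (hu : u ≠ 0) (hq : l • u + m • v ≠ 0)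
    (hP : Projectivization.mk (ZMod p) u hu = P.1)
    (hQ : Projectivization.mk (ZMod p) _ hq = Q.1) :
    ∃ R, TripleRel (Gcubic p) P Q R := by
  have hrank : IsLine (Submodule.span (ZMod p) {u, v}) := by
    have := finrank_span_eq_card hi
    have e : Set.range ![u, v] = {u, v} := by
      ext
      simp [eq_comm, or_comm]
    rw [e] at this
    simpa [IsLine] using this
  have mu : u ∈ Submodule.span (ZMod p) {u, v} := Submodule.subset_span (by simp)
  have mv : v ∈ Submodule.span (ZMod p) {u, v} := Submodule.subset_span (by simp)
  have mrep : ∀ (w : Fin 3 → ZMod p) (hw : w ≠ 0), w ∈ Submodule.span (ZMod p) {u, v} →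
      OnLine (Submodule.span (ZMod p) {u, v}) (Projectivization.mk (ZMod p) w hw) := by
    intro w hw hm
    obtain ⟨a, ha⟩ := Projectivization.exists_smul_eq_mk_rep (ZMod p) w hw
    unfold OnLine
    rw [← ha, Units.smul_def]
    exact Submodule.smul_mem _ _ hm
  by_cases hL : LineOnSurf (Gcubic p) (Submodule.span (ZMod p) {u, v})
  · refine ⟨P, _, hrank, Or.inr ⟨hL, ?_, ?_, ?_⟩⟩
    · rw [← hP]; exact mrep _ _ mu
    · rw [← hQ]
      exact mrep _ _ (Submodule.add_mem _ (Submodule.smul_mem _ _ mu) (Submodule.smul_mem _ _ mv))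
    · rw [← hP]; exact mrep _ _ mu
  · have hab : β • u + α • v ≠ 0 := by
      intro h0
      obtain ⟨hb, ha⟩ := (LinearIndependent.pair_iff.1 hi) _ _ h0
      apply hL
      apply lineRestrict_zero
      rw [H, ha, hb]
      simp
    have hz : eval (β • u + α • v) (Gcubic p) = 0 := by
      rw [← eval_lineRestrict, H]
      simp
      right; right
      ring
    refine ⟨⟨_, mk_mem_zeroSet (Gcubic_hom p) hab hz⟩, _, hrank, Or.inl ⟨hL, u, v, mu, mv, hi, c,
      ![1, l, β], ![0, m, α], ?_, hc, ?_, ?_, ?_, ?_⟩⟩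
    · intro k
      fin_cases k
      · simpa using hu
      · exact hq
      · exact hab
    · rw [H, Fin.prod_univ_three]; rfl
    · rw [← hP]; congr 1; simp
    · rw [← hQ]; rfl
    · rfl

lemma zero_eval (P : zeroSet (Gcubic p)) :
    P.1.rep 0 ^ 3 + P.1.rep 1 ^ 3 + P.1.rep 2 ^ 3 = 0 := by
  have := P.2
  rw [← eval_Gcubic]
  exact this

lemma lineRestrict_eq (u v : Fin 3 → ZMod p) : lineRestrict (Gcubic p) u v =
    C (u 0 ^ 3 + u 1 ^ 3 + u 2 ^ 3) * X 0 ^ 3 +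
    C (3 * (u 0 ^ 2 * v 0 + u 1 ^ 2 * v 1 + u 2 ^ 2 * v 2)) * (X 0 ^ 2 * X 1) +
    C (3 * (u 0 * v 0 ^ 2 + u 1 * v 1 ^ 2 + u 2 * v 2 ^ 2)) * (X 0 * X 1 ^ 2) +
    C (v 0 ^ 3 + v 1 ^ 3 + v 2 ^ 3) * X 1 ^ 3 := by
  have h3 : (C 3 : MvPolynomial (Fin 2) (ZMod p)) = 3 := map_ofNat C 3
  simp only [lineRestrict, Gcubic, map_add, map_mul, map_pow, aeval_X, h3]
  ring

lemma exists_tangent (P : zeroSet (Gcubic p)) : ∃ v : Fin 3 → ZMod p,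
    LinearIndependent (ZMod p) ![P.1.rep, v] ∧
    P.1.rep 0 ^ 2 * v 0 + P.1.rep 1 ^ 2 * v 1 + P.1.rep 2 ^ 2 * v 2 = 0 := by
  have hz := zero_eval p P
  have hn := P.1.rep_nonzero
  generalize P.1.rep = u at *
  by_cases h0 : u 0 = 0
  · refine ⟨![1, 0, 0], ?_, ?_⟩
    · rw [LinearIndependent.pair_iff]
      intro s t h
      have e0 := congrFun h 0
      have e1 := congrFun h 1
      have e2 := congrFun h 2
      simp [h0] at e0 e1 e2
      refine ⟨?_, e0⟩
      by_contra hs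
      apply hn
      funext i
      fin_cases i
      · exact h0
      · exact e1.resolve_left hs
      · exact e2.resolve_left hs
    · simp [h0]
  · refine ⟨![0, u 2 ^ 2, - u 1 ^ 2], ?_, ?_⟩
    · rw [LinearIndependent.pair_iff]
      intro s t h
      have e0 := congrFun h 0
      have e1 := congrFun h 1
      have e2 := congrFun h 2
      simp [h0] at e0 e1 e2
      subst e0
      simp at e1 e2
      refine ⟨rfl, ?_⟩
      by_contra ht
      have e1 := e1.resolve_left ht
      have e2 := e2.resolve_left ht
      apply h0
      rw [e1, e2] at hz
      simpa using hz
    · simp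
      ring

lemma third (P Q : zeroSet (Gcubic p)) : ∃ R, TripleRel (Gcubic p) P Q R := by
  by_cases hPQ : P = Q
  · subst hPQ
    obtain ⟨v, hi, hv⟩ := exists_tangent p P
    have hz := zero_eval p P
    refine third_aux p hi 1 1 0
      (3 * (P.1.rep 0 * v 0 ^ 2 + P.1.rep 1 * v 1 ^ 2 + P.1.rep 2 * v 2 ^ 2))
      (-(v 0 ^ 3 + v 1 ^ 3 + v 2 ^ 3)) one_ne_zero ?_ P P P.1.rep_nonzero
      (by simpa using P.1.rep_nonzero) P.1.mk_rep ?_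
    · rw [lineRestrict_eq, hz, hv]
      simp only [map_neg, map_zero, map_one, mul_zero]
      ring
    · simp [P.1.mk_rep]
  · have hne : P.1 ≠ Q.1 := fun h => hPQ (Subtype.ext h)
    have hi : LinearIndependent (ZMod p) ![P.1.rep, Q.1.rep] := by
      have := (Projectivization.independent_pair_iff_ne P.1 Q.1).2 hne
      rw [Projectivization.independent_iff] at this
      have e : ![P.1.rep, Q.1.rep] = Projectivization.rep ∘ ![P.1, Q.1] := by
        funext i
        fin_cases i <;> rfl
      rw [e]
      exact this
    have hz := zero_eval p P
    have hz' := zero_eval p Q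
    generalize hu : P.1.rep = u at *
    generalize hv : Q.1.rep = v at *
    refine third_aux p hi (-1) 0 1
      (3 * (u 0 ^ 2 * v 0 + u 1 ^ 2 * v 1 + u 2 ^ 2 * v 2))
      (-(3 * (u 0 * v 0 ^ 2 + u 1 * v 1 ^ 2 + u 2 * v 2 ^ 2)))
      (neg_ne_zero.2 one_ne_zero) ?_ P Q (hu ▸ P.1.rep_nonzero)
      (by simpa using (hv ▸ Q.1.rep_nonzero : v ≠ 0)) ?_ ?_
    · rw [lineRestrict_eq, hz, hz']
      simp only [map_neg, map_zero, map_one]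
      ring
    · simp [← hu, P.1.mk_rep]
    · simp [← hv, Q.1.mk_rep]

end CubicSurf
namespace CubicSurf

variable (p : ℕ) [Fact p.Prime]

/-! ### Structure of `H⁰` -/

lemma class_rel (A B Q : zeroSet (Gcubic p)) : ∃ R,
    HClass (Gcubic p) A + HClass (Gcubic p) B = HClass (Gcubic p) Q + HClass (Gcubic p) R := by
  obtain ⟨S, hS⟩ := third p A B
  obtain ⟨R, hR⟩ := third p S Q
  refine ⟨R, ?_⟩
  simp only [HClass]
  rw [← map_add, ← map_add, ← sub_eq_zero, ← map_sub, QuotientAddGroup.mk'_apply,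
    QuotientAddGroup.eq_zero_iff]
  refine ⟨?_, ?_⟩
  · have h1 : FreeAbelianGroup.of A + FreeAbelianGroup.of B + FreeAbelianGroup.of S
        ∈ Gp (Gcubic p) := AddSubgroup.subset_closure ⟨A, B, S, hS, rfl⟩
    have h2 : FreeAbelianGroup.of S + FreeAbelianGroup.of Q + FreeAbelianGroup.of R
        ∈ Gp (Gcubic p) := AddSubgroup.subset_closure ⟨S, Q, R, hR, rfl⟩
    have := AddSubgroup.sub_mem _ h1 h2
    have e : FreeAbelianGroup.of A + FreeAbelianGroup.of B -
        (FreeAbelianGroup.of Q + FreeAbelianGroup.of R) =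
        FreeAbelianGroup.of A + FreeAbelianGroup.of B + FreeAbelianGroup.of S -
        (FreeAbelianGroup.of S + FreeAbelianGroup.of Q + FreeAbelianGroup.of R) := by abel
    rw [e]
    exact this
  · show degHom (Gcubic p) _ = 0
    simp [degHom]

lemma class_normal (g : GS (Gcubic p)) : ∃ P : zeroSet (Gcubic p),
    QuotientAddGroup.mk' (Gpp (Gcubic p)) g =
      HClass (Gcubic p) P + (degHom (Gcubic p) g - 1) • HClass (Gcubic p) (OPt p) := by
  induction g using FreeAbelianGroup.induction_on with
  | zero =>
    refine ⟨OPt p, ?_⟩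
    simp
  | of x =>
    refine ⟨x, ?_⟩
    simp [HClass, degHom]
  | neg x _ =>
    obtain ⟨R, hR⟩ := class_rel p (OPt p) (OPt p) x
    refine ⟨R, ?_⟩
    have e : degHom (Gcubic p) (-FreeAbelianGroup.of x) - 1 = -2 := by
      simp [degHom]
    rw [e, map_neg]
    change - HClass (Gcubic p) x = _
    rw [neg_smul, two_smul, hR]
    abel
  | add x y hx hy =>
    obtain ⟨P, hP⟩ := hx
    obtain ⟨Q, hQ⟩ := hy
    obtain ⟨R, hR⟩ := class_rel p P Q (OPt p)
    refine ⟨R, ?_⟩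
    rw [map_add, map_add, hP, hQ]
    have e : ∀ (a b : ℤ) (A B o r : HS (Gcubic p)), A + B = o + r →
        A + (a - 1) • o + (B + (b - 1) • o) = r + (a + b - 1) • o := by
      intro a b A B o r h
      have : A = o + r - B := by rw [← h]; abel
      rw [this]
      module
    exact e _ _ _ _ _ _ hR

lemma H0_eq (x : H0 (Gcubic p)) : ∃ P, x = H0diff (Gcubic p) P (OPt p) := by
  obtain ⟨x, hx⟩ := x
  obtain ⟨g, rfl⟩ := QuotientAddGroup.mk'_surjective _ x
  have hd : degHom (Gcubic p) g = 0 := hx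
  obtain ⟨P, hP⟩ := class_normal p g
  refine ⟨P, Subtype.ext ?_⟩
  change QuotientAddGroup.mk' (Gpp (Gcubic p)) g = HClass (Gcubic p) P - HClass (Gcubic p) (OPt p)
  rw [hP, hd]
  simp [sub_eq_add_neg]

section iso

variable (h2 : (2 : ZMod p) ≠ 0) (h3 : (3 : ZMod p) ≠ 0)

/-- The homomorphism to the Mordell-Weil group. -/
def psi : HS (Gcubic p) →+ (EW p).Point :=
  QuotientAddGroup.lift (Gpp (Gcubic p)) (FreeAbelianGroup.lift (phi p)) (by
    intro x hx
    have hx1 : x ∈ Gp (Gcubic p) := hx.1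
    have : Gp (Gcubic p) ≤ (FreeAbelianGroup.lift (phi p)).ker := by
      unfold Gp
      rw [AddSubgroup.closure_le]
      rintro y ⟨P, Q, R, h, rfl⟩
      simp only [SetLike.mem_coe, AddMonoidHom.mem_ker, map_add, FreeAbelianGroup.lift_apply_of]
      exact triple_sum p h2 h3 h
    exact this hx1)

lemma psi_class (P : zeroSet (Gcubic p)) : psi p h2 h3 (HClass (Gcubic p) P) = phi p P := by
  simp [psi, HClass]

lemma phi_O : phi p (OPt p) = 0 := by
  unfold phi OPt
  rw [vecPt_mk]
  simp [vecPt, toPt_zero]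

lemma phi_eq_zero (h3 : (3 : ZMod p) ≠ 0) (P : zeroSet (Gcubic p)) (h : phi p P = 0) : P = OPt p := by
  have hz := zero_eval p P
  have hmk := P.1.mk_rep
  apply Subtype.ext
  rw [← hmk]
  unfold OPt
  rw [Projectivization.mk_eq_mk_iff']
  unfold phi vecPt at h
  clear hmk
  generalize P.1.rep = u at *
  have hs : u 0 + u 1 = 0 := by
    by_contra hne
    have hW : Wf p (-3 * u 2) (4 * u 0 - 5 * u 1) (u 0 + u 1) = 0 := by
      unfold Wf
      linear_combination 27 * hz
    rw [toPt_some p hne (Wf_nonsing p h3 hne hW)] at h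
    exact WeierstrassCurve.Affine.Point.some_ne_zero _ h
  have h1 : u 1 = - u 0 := by linear_combination hs
  have h0 : u 2 = 0 := by
    have : u 2 ^ 3 = 0 := by
      rw [h1] at hz
      linear_combination hz
    simpa using this
  refine ⟨u 0, ?_⟩
  funext i
  fin_cases i <;> simp [h1, h0]

lemma phi_surj (h3 : (3 : ZMod p) ≠ 0) (T : (EW p).Point) : ∃ P, phi p P = T := by
  rcases T with _ | ⟨x, y, h⟩
  · exact ⟨OPt p, phi_O p⟩
  · have hE := (EW_nonsing p h3 _ _).1 h
    have hv : (![y + 5, 4 - y, -3 * x] : Fin 3 → ZMod p) ≠ 0 := by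
      intro h0
      have e0 := congrFun h0 0
      have e1 := congrFun h0 1
      simp at e0 e1
      exact pow_ne_zero 2 h3 (by linear_combination e0 + e1)
    refine ⟨⟨Projectivization.mk _ _ hv, mk_mem_zeroSet (Gcubic_hom p) hv ?_⟩, ?_⟩
    · rw [eval_Gcubic]
      simp
      linear_combination 27 * hE
    · unfold phi
      rw [vecPt_mk]
      have h9 : (9 : ZMod p) ≠ 0 := by
        have := pow_ne_zero 2 h3
        intro h; apply this; linear_combination h
      have e : vecPt p ![y + 5, 4 - y, -3 * x] = toPt p x y 1 := by
        rw [← toPt_smul p h9 x y 1]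
        unfold vecPt
        simp
        congr 1 <;> ring
      rw [e, toPt_some p one_ne_zero (by simpa using h)]
      simp

/-- `H⁰` is the Mordell-Weil group of the Weierstrass model. -/
def H0equiv : H0 (Gcubic p) ≃+ (EW p).Point :=
  AddEquiv.ofBijective ((psi p h2 h3).comp (H0 (Gcubic p)).subtype) (by
    have hval : ∀ P, ((psi p h2 h3).comp (H0 (Gcubic p)).subtype)
        (H0diff (Gcubic p) P (OPt p)) = phi p P := by
      intro P
      simp [H0diff, psi_class, phi_O]
    constructor
    · rw [injective_iff_map_eq_zero]
      intro x hx
      obtain ⟨P, rfl⟩ := H0_eq p x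
      rw [hval] at hx
      rw [phi_eq_zero p h3 P hx]
      apply Subtype.ext
      simp [H0diff]
    · intro T
      obtain ⟨P, hP⟩ := phi_surj p h3 T
      exact ⟨_, (hval P).trans hP⟩)

end iso

/-! ### Two-torsion and the quotient by two -/

instance EW_finite : Finite (EW p).Point := by
  have : Function.Injective (fun T : (EW p).Point =>
      match T with
      | .zero => (none : Option (ZMod p × ZMod p))
      | .some x y _ => some (x, y)) := by
    rintro (_ | ⟨x, y, h⟩) (_ | ⟨x', y', h'⟩) e <;> simp_all
  exact Finite.of_injective _ this

lemma two_torsion_iff (h3 : (3 : ZMod p) ≠ 0) (x y : ZMod p) (h : (EW p).Nonsingular x y) :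
    (2 • (WeierstrassCurve.Affine.Point.some x y h : (EW p).Point) = 0) ↔ 2 * y + 1 = 0 := by
  rw [two_nsmul, ← eq_neg_iff_add_eq_zero, WeierstrassCurve.Affine.Point.neg_some,
    WeierstrassCurve.Affine.Point.some.injEq]
  simp only [WeierstrassCurve.Affine.negY, true_and]
  constructor
  · intro h; linear_combination h
  · intro h; linear_combination h

lemma card_torsion (h2 : (2 : ZMod p) ≠ 0) (h3 : (3 : ZMod p) ≠ 0) (t w : ZMod p)
    (ht : t ^ 3 = 2) (hw : w ^ 2 + w + 1 = 0) :
    Nat.card (torsion 2 (EW p).Point) = 4 := by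
  have ht0 : t ≠ 0 := by rintro rfl; apply h2; rw [← ht]; simp
  have hw3 : w ^ 3 = 1 := by linear_combination (w - 1) * hw
  have hw0 : w ≠ 0 := by rintro rfl; simp at hw
  have hw1 : w ≠ 1 := by rintro rfl; exact h3 (by linear_combination hw)
  set x₀ : ZMod p := 3 / t ^ 2 with hx₀
  have hx0 : x₀ ≠ 0 := div_ne_zero h3 (pow_ne_zero 2 ht0)
  have h4 : 4 * x₀ ^ 3 = 27 := by
    rw [hx₀]
    field_simp
    linear_combination (-27) * (t ^ 3 + 2) * ht
  have hy : 2 * (-1 / 2 : ZMod p) + 1 = 0 := by field_simp; ring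
  have hN : ∀ x : ZMod p, 4 * x ^ 3 = 27 → (EW p).Nonsingular x (-1 / 2) := by
    intro x hx
    rw [EW_nonsing p h3]
    apply mul_left_cancel₀ (pow_ne_zero 2 h2)
    linear_combination (2 * (-1 / 2 : ZMod p) + 1) * hy - hx
  have n0 := hN x₀ h4
  have n1 := hN (w * x₀) (by rw [mul_pow, hw3]; linear_combination h4)
  have n2 := hN (w ^ 2 * x₀) (by linear_combination h4 + 4 * x₀ ^ 3 * (w ^ 3 + 1) * hw3)
  have hset : (torsion 2 (EW p).Point : Set (EW p).Point) =
      {0, .some _ _ n0, .some _ _ n1, .some _ _ n2} := by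
    ext T
    have hmem : T ∈ (torsion 2 (EW p).Point : Set (EW p).Point) ↔ 2 • T = 0 := Iff.rfl
    rw [hmem]
    rcases T with _ | ⟨x, y, h⟩
    · rw [← WeierstrassCurve.Affine.Point.zero_def]
      simp
    · rw [two_torsion_iff p h3]
      have hE := (EW_nonsing p h3 _ _).1 h
      simp only [Set.mem_insert_iff, WeierstrassCurve.Affine.Point.some_ne_zero, false_or,
        Set.mem_singleton_iff, WeierstrassCurve.Affine.Point.some.injEq]
      have hy2 : y = -1 / 2 ↔ 2 * y + 1 = 0 := by
        constructor
        · rintro rfl; exact hy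
        · intro h; apply mul_left_cancel₀ h2; linear_combination h - hy
      constructor
      · intro h1
        have : (x - x₀) * ((x - w * x₀) * (x - w ^ 2 * x₀)) = 0 := by
          have e : 4 * x ^ 3 = 27 := by
            linear_combination (-4) * hE + (2 * y + 1) * h1
          apply mul_left_cancel₀ (pow_ne_zero 2 h2)
          linear_combination e - h4 + (-4 * x ^ 2 * x₀ + 4 * x * x₀ ^ 2 * w) * hw +
            (-4 * x₀ ^ 3) * hw3
        rcases mul_eq_zero.1 this with h' | h'
        · exact Or.inl ⟨sub_eq_zero.1 h', hy2.2 h1⟩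
        rcases mul_eq_zero.1 h' with h' | h'
        · exact Or.inr (Or.inl ⟨sub_eq_zero.1 h', hy2.2 h1⟩)
        · exact Or.inr (Or.inr ⟨sub_eq_zero.1 h', hy2.2 h1⟩)
      · rintro (h' | h' | h') <;> exact hy2.1 h'.2
  have hc : (torsion 2 (EW p).Point : Set (EW p).Point).ncard = 4 := by
    rw [hset]
    have d01 : x₀ ≠ w * x₀ := fun h => hw1 (mul_right_cancel₀ hx0 (by linear_combination -h))
    have d02 : x₀ ≠ w ^ 2 * x₀ := by
      intro h
      have : w ^ 2 = 1 := mul_right_cancel₀ hx0 (by linear_combination -h)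
      apply hw1
      linear_combination hw3 - w * this
    have d12 : w * x₀ ≠ w ^ 2 * x₀ := by
      intro h
      have : w = w ^ 2 := mul_right_cancel₀ hx0 h
      apply hw1
      apply mul_left_cancel₀ hw0
      linear_combination -this
    rw [Set.ncard_insert_of_notMem, Set.ncard_insert_of_notMem, Set.ncard_pair]
    · simp [d12]
    · simp [d01, d02]
    · simp [(WeierstrassCurve.Affine.Point.some_ne_zero _).symm]
  rw [← hc]
  rfl

lemma card_modTwo (A : Type*) [AddCommGroup A] [Finite A] :
    Nat.card (ModP 2 A) = Nat.card (torsion 2 A) := by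
  have h1 := AddSubgroup.card_eq_card_quotient_mul_card_addSubgroup
    (AddMonoidHom.range (nsmulAddMonoidHom 2 : A →+ A))
  have h2 := AddSubgroup.card_eq_card_quotient_mul_card_addSubgroup
    (nsmulAddMonoidHom 2 : A →+ A).ker
  have h3 := Nat.card_congr (QuotientAddGroup.quotientKerEquivRange
    (nsmulAddMonoidHom 2 : A →+ A)).toEquiv
  rw [h3, mul_comm] at h2
  rw [h2] at h1
  exact (Nat.eq_of_mul_eq_mul_right Nat.card_pos h1).symm

end CubicSurf

open CubicSurf MvPolynomial in
/-- Let `p ≡ 1 (mod 3)` be a prime such that `2` is a cube mod `p`,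
and let `C_p : x³ + y³ + z³ = 0` over `F_p`, with `O = (1 : -1 : 0)`.  Then
`dim_{F₂} Pic⁰(C_p)/2Pic⁰(C_p) = 2`, every element of `Pic⁰(C_p)/2Pic⁰(C_p)` is
represented by the class of `P - O` for some `P ∈ C_p(F_p)`, and equivalently the
elliptic curve `E : y² + y = x³ - 7` over `F_p` (a Weierstrass model of `(C_p, O)`)
has full 2-torsion: `E(F_p)[2] ≃ ℤ/2ℤ × ℤ/2ℤ`. -/
theorem pic0_mod_two_of_fermat_cubic
    (p : ℕ) [Fact p.Prime] (hp3 : p % 3 = 1) (hcube : ∃ t : ZMod p, t ^ 3 = 2) :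
    dimModP 2 (Pic0C p) = 2 ∧
    (∀ x : ModP 2 (Pic0C p), ∃ P : zeroSet (Gcubic p),
      x = QuotientAddGroup.mk (H0diff (Gcubic p) P (OPt p))) ∧
    Nonempty ((torsion 2
        (WeierstrassCurve.toAffine ⟨0, 0, 1, 0, -7⟩ : WeierstrassCurve.Affine (ZMod p)).Point)
      ≃+ (ZMod 2 × ZMod 2)) := by
  have hp : p.Prime := Fact.out
  have h2 : (2 : ZMod p) ≠ 0 := by
    intro h
    have : p ∣ 2 := (ZMod.natCast_eq_zero_iff 2 p).1 (by exact_mod_cast h)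
    have := (Nat.prime_dvd_prime_iff_eq hp Nat.prime_two).1 this
    omega
  have h3 : (3 : ZMod p) ≠ 0 := by
    intro h
    have : p ∣ 3 := (ZMod.natCast_eq_zero_iff 3 p).1 (by exact_mod_cast h)
    have := (Nat.prime_dvd_prime_iff_eq hp Nat.prime_three).1 this
    omega
  obtain ⟨t, ht⟩ := hcube
  obtain ⟨w, hw⟩ : ∃ w : ZMod p, w ^ 2 + w + 1 = 0 := by
    have hdvd : 3 ∣ Nat.card (ZMod p)ˣ := by
      rw [Nat.card_eq_fintype_card, ZMod.card_units_eq_totient, Nat.totient_prime hp]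
      omega
    have : Fact (Nat.Prime 3) := ⟨Nat.prime_three⟩
    obtain ⟨g, hg⟩ := exists_prime_orderOf_dvd_card' 3 hdvd
    refine ⟨(g : ZMod p), ?_⟩
    have hg3 : (g : ZMod p) ^ 3 = 1 := by
      have := pow_orderOf_eq_one g
      rw [hg] at this
      rw [← Units.val_pow_eq_pow_val, this, Units.val_one]
    have hg1 : (g : ZMod p) ≠ 1 := by
      intro h
      have : g = 1 := Units.ext h
      rw [this, orderOf_one] at hg
      omega
    apply mul_left_cancel₀ (sub_ne_zero.2 hg1)
    linear_combination hg3
  have hcard := card_torsion p h2 h3 t w ht hw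
  let e := H0equiv p h2 h3
  have : Finite (Pic0C p) := Finite.of_equiv _ e.symm.toEquiv
  refine ⟨?_, ?_, ?_⟩
  · have hc : Nat.card (torsion 2 (Pic0C p)) = 4 := by
      rw [← hcard]
      refine Nat.card_congr (e.toEquiv.subtypeEquiv fun x => ?_)
      change 2 • x = 0 ↔ 2 • e x = 0
      rw [← map_nsmul, map_eq_zero_iff e e.injective]
    rw [← card_modTwo] at hc
    have : Fact (Nat.Prime 2) := ⟨Nat.prime_two⟩
    have hfin : Module.Finite (ZMod 2) (ModP 2 (Pic0C p)) := Module.Finite.of_finite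
    have := Module.natCard_eq_pow_finrank (K := ZMod 2) (V := ModP 2 (Pic0C p))
    rw [hc, Nat.card_zmod] at this
    have hr : Module.finrank (ZMod 2) (ModP 2 (Pic0C p)) = 2 :=
      (Nat.pow_right_injective le_rfl (by simpa using this : 2 ^ 2 = 2 ^ _)).symm
    unfold dimModP
    rw [← Module.finrank_eq_rank, hr]
    rfl
  · intro x
    obtain ⟨y, rfl⟩ := QuotientAddGroup.mk_surjective x
    obtain ⟨P, rfl⟩ := H0_eq p y
    exact ⟨P, rfl⟩
  · change Nonempty (torsion 2 (EW p).Point ≃+ _)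
    have : IsAddKleinFour (torsion 2 (EW p).Point) := by
      refine ⟨hcard, ?_⟩
      apply Nat.dvd_antisymm
      · apply AddMonoid.exponent_dvd_of_forall_nsmul_eq_zero
        intro x
        exact Subtype.ext x.2
      · have : Nontrivial (torsion 2 (EW p).Point) := by
          rw [← Finite.one_lt_card_iff_nontrivial, hcard]; norm_num
        have hd : AddMonoid.exponent (torsion 2 (EW p).Point) ∣ 2 := by
          apply AddMonoid.exponent_dvd_of_forall_nsmul_eq_zero
          intro x
          exact Subtype.ext x.2
        rcases (Nat.dvd_prime Nat.prime_two).1 hd with h | h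
        · rw [AddMonoid.exp_eq_one_iff] at h
          exact absurd h (not_subsingleton _)
        · rw [h]
    exact IsAddKleinFour.nonempty_addEquiv
end
end
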